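/- arXiv:1801.05919 — 5 statements merged into one kernel-verified Lean document; each statement's English description precedes it below -/
import Mathlib

section
/- Proposition 1 (Construction A, existence form): Let N, B, T be integers with 1 ≤ N ≤ B ≤ T, and write T = aB + δ with a ≥ 0 and 1 ≤ δ ≤ B. Assume δ ≥ B − N. Then for every prime power q with q ≥ T + 1, there exists a linear code C over the field F_{q²} of length n = B + T − N + 1 and dimension k = T − N + 1 that conforms to C(N,B,W) with delay T. In particular, its rate k/n = (T−N+1)/(B+T−N+1) meets the rate upper bound with equality. -/
/-!
Proposition 1 (Construction A, existence form).

For a linear code `C ⊆ F^n` (an `F`-subspace), coordinate `i` is *recoverable* from a set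
`I` of coordinates if there are scalars `λ_j` with `c_i = ∑_{j ∈ I} λ_j c_j` for all `c ∈ C`.
With `Δ_i := min (i + T) (n - 1)`, the code *conforms to* `C(N,B,W)` with delay `T` if every
coordinate `i` is recoverable from `{0,…,Δ_i} \ 𝒩` for every `𝒩` with `|𝒩| ≤ N`, and from
`{0,…,Δ_i} \ [u,v]` for every interval with `v - u + 1 ≤ B`.

The theorem: for `1 ≤ N ≤ B ≤ T`, `T = aB + δ` with `1 ≤ δ ≤ B`, and `δ ≥ B - N`, for every
prime power `q = p^e ≥ T + 1` there is a linear code over `F_{q²} = GaloisField p (2e)` of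
length `n = B + T - N + 1` and dimension `k = T - N + 1` conforming to `C(N,B,W)` with delay
`T`; its rate `k/n` meets the rate upper bound with equality.
-/

/-!
The code has the following `B` parity checks. For `i < B - N`, a diagonal check
`α c_i + c_{i+B} + ⋯ + c_{i+aB} + c_{i+T} = 0` with `α ∈ F_{q²} \ F_q`; the condition
`δ ≥ B - N` makes `i + aB < T`. For `s < N`, a check `∑_{j<T} x_j^s c_j = 0` with distinct
`x_j ∈ F_q`, where `c_{n-1}` is added to the left side for `s = N - 1`. Thus on the positions
`0, …, T - 1, n - 1` these last checks are an MDS matrix over `F_q`, and they do not meet the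
positions `T, …, n - 2`, each of which is met by exactly one diagonal check.

By duality (`recoverable_of_vanishing`), symbol `i` is recoverable from `I` if every codeword
vanishing on `I` vanishes at `i`.

For `i ≥ B - N` the delay window is everything. Any `N` erasures are corrected by the MDS checks,
with the diagonal checks for the positions `T, …, n - 2` (`ParityChecks.eq_zero_of_count`). In a burst of
length `B` every diagonal check either absorbs its position `i + T` or forces one erased symbol to vanish, which leaves `N` unknowns for the MDS
checks (`ParityChecks.eq_zero_of_burst`). This also gives the rank `B` of the check matrix, hence
the dimension of the code.

For `i < B - N` the checks available within the window are the `i`-th diagonal one and the first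
`N - 1` Vandermonde ones. A burst of length `B` containing `i` meets no other position of the
diagonal check, which therefore recovers `c_i` (`ParityChecks.eq_zero_of_burst_window`). For `N`
arbitrary erasures, the `N - 1` Vandermonde equations suffice unless all erasures are below `T`, and
in that case the ratios `c_j / c_i` lie in `F_q`. The diagonal check would then express `α` through
elements of `F_q` (`ParityChecks.eq_zero_of_window`). Membership in `F_q` is expressed as being fixed
by the Frobenius map `y ↦ y^q`.
-/

open Finset

/-- Coordinate `i` of the linear code `C` is recoverable from the coordinate set `I`. -/
def Recoverable {F : Type*} [Field F] {n : ℕ} (C : Submodule F (Fin n → F))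
    (i : Fin n) (I : Finset (Fin n)) : Prop :=
  ∃ lam : Fin n → F, ∀ c ∈ C, c i = ∑ j ∈ I, lam j * c j

/-- The linear code `C` conforms to the channel `C(N,B,W)` with delay constraint `T`. -/
def Conforms {F : Type*} [Field F] {n : ℕ} (C : Submodule F (Fin n → F))
    (N B T : ℕ) : Prop :=
  ∀ i : Fin n,
    (∀ 𝒩 : Finset (Fin n), 𝒩.card ≤ N →
      Recoverable C i
        ((Finset.univ.filter fun j : Fin n => j.val ≤ min (i.val + T) (n - 1)) \ 𝒩)) ∧
    (∀ u v : ℕ, u ≤ v → v ≤ n - 1 → v - u + 1 ≤ B →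
      Recoverable C i
        (Finset.univ.filter fun j : Fin n =>
          j.val ≤ min (i.val + T) (n - 1) ∧ ¬(u ≤ j.val ∧ j.val ≤ v)))

/-! ### Recoverability by duality, and field elements -/

/-- Recoverability is dual to a vanishing condition: `c_i` is a combination of the `c_j`, `j ∈ I`,
as soon as every codeword vanishing on `I` vanishes at `i`. -/
theorem recoverable_of_vanishing {F : Type*} [Field F] {n : ℕ} (C : Submodule F (Fin n → F))
    (i : Fin n) (I : Finset (Fin n))
    (h : ∀ c ∈ C, (∀ j ∈ I, c j = 0) → c i = 0) : Recoverable C i I := by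
  classical
  let ev : Fin n → Module.Dual F C := fun j => (LinearMap.proj j).comp C.subtype
  have hmem : ev i ∈ Submodule.span F (Set.range fun j : I => ev j) := by
    apply FiniteDimensional.mem_span_of_iInf_ker_le_ker
    intro c hc
    simp only [Submodule.mem_iInf, LinearMap.mem_ker] at hc ⊢
    exact h c.1 c.2 fun j hj => hc ⟨j, hj⟩
  obtain ⟨w, hw⟩ := (Submodule.mem_span_range_iff_exists_fun F).1 hmem
  refine ⟨fun j => if hj : j ∈ I then w ⟨j, hj⟩ else 0, fun c hc => ?_⟩
  have h1 := congrArg (fun g : Module.Dual F C => g ⟨c, hc⟩) hw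
  rw [← Finset.sum_coe_sort I]
  simpa [ev] using h1.symm

/-- The elements of `F_{q²}` used by the construction: `T` distinct points of the subfield `F_q`,
described as fixed points of `y ↦ y^q`, and an element `α` outside `F_q`. -/
theorem exists_points (p e T : ℕ) [Fact p.Prime] (he : 1 ≤ e) (hq : T ≤ p ^ e) :
    ∃ (x : ℕ → GaloisField p (2 * e)) (α : GaloisField p (2 * e)),
      Set.InjOn x (Set.Iio T) ∧ (∀ j, iterateFrobenius _ p e (x j) = x j) ∧
      iterateFrobenius _ p e α ≠ α := by
  classical
  have he0 : e ≠ 0 := by omega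
  have hp : 1 < p := (Fact.out : p.Prime).one_lt
  have : Fintype (GaloisField p e) := Fintype.ofFinite _
  have : Fintype (GaloisField p (2 * e)) := Fintype.ofFinite _
  have hcard : Fintype.card (GaloisField p e) = p ^ e := by
    rw [← Nat.card_eq_fintype_card, GaloisField.card p e he0]
  have hcard2 : Fintype.card (GaloisField p (2 * e)) = p ^ (2 * e) := by
    rw [← Nat.card_eq_fintype_card, GaloisField.card p (2 * e) (by omega)]
  obtain ⟨f⟩ : Nonempty (GaloisField p e →ₐ[ZMod p] GaloisField p (2 * e)) :=
    FiniteField.nonempty_algHom_of_finrank_dvd (by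
      rw [GaloisField.finrank p he0, GaloisField.finrank p (by omega)]
      exact dvd_mul_left _ _)
  let en := (Fintype.equivFinOfCardEq hcard).symm
  have hpos : 0 < p ^ e := by positivity
  refine ⟨fun j => f (en ⟨j % p ^ e, Nat.mod_lt _ hpos⟩), ?_⟩
  obtain ⟨α, hα⟩ : ∃ α : GaloisField p (2 * e), iterateFrobenius _ p e α ≠ α := by
    by_contra! hall
    have hne := FiniteField.X_pow_card_pow_sub_X_ne_zero (GaloisField p (2 * e)) he0 hp
    have hdeg := FiniteField.X_pow_card_pow_sub_X_natDegree_eq (GaloisField p (2 * e)) he0 hp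
    have hle := Polynomial.card_le_degree_of_subset_roots (Z := Finset.univ)
      (p := (Polynomial.X ^ p ^ e - Polynomial.X : Polynomial (GaloisField p (2 * e)))) (by
        intro y _
        rw [Polynomial.mem_roots hne]
        simpa [Polynomial.IsRoot, iterateFrobenius_def, sub_eq_zero] using hall y)
    rw [hdeg, Finset.card_univ, hcard2] at hle
    exact absurd hle (not_le.2 (Nat.pow_lt_pow_right hp (by omega)))
  refine ⟨α, ?_, ?_, hα⟩
  · intro j hj k hk hjk
    have h1 := en.injective (f.injective hjk)
    simp only [Set.mem_Iio] at hj hk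
    simpa [Nat.mod_eq_of_lt (hj.trans_le hq), Nat.mod_eq_of_lt (hk.trans_le hq)] using h1
  · intro j
    rw [iterateFrobenius_def, ← map_pow]
    have hfix := FiniteField.pow_card (en ⟨j % p ^ e, Nat.mod_lt _ hpos⟩)
    rw [hcard] at hfix
    rw [hfix]

/-! ### Vandermonde argument -/

open Polynomial in
/-- Any `M` columns of a Vandermonde matrix with `M` rows are linearly independent: a vector
supported on at most `M` of the points whose first `M` power sums vanish is zero. -/
theorem eq_zero_of_power_sums {F : Type*} [Field F] {x f : ℕ → F} {T M : ℕ}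
    (hx : Set.InjOn x (Set.Iio T)) (E : Finset ℕ) (hE : E.card ≤ M)
    (hf : ∀ j < T, j ∉ E → f j = 0)
    (hs : ∀ s < M, ∑ j ∈ range T, x j ^ s * f j = 0) : ∀ j < T, f j = 0 := by
  classical
  intro j₀ hj₀
  by_cases hjE : j₀ ∈ E
  swap
  · exact hf j₀ hj₀ hjE
  -- Lagrange-type polynomial killing every other point of `E`
  let P : F[X] := ∏ k ∈ (E.filter (· < T)).erase j₀, (X - C (x k))
  have hP : P.natDegree < M := by
    have h1 : P.natDegree = ((E.filter (· < T)).erase j₀).card := by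
      simp [P, natDegree_prod_of_monic _ _ fun k _ => monic_X_sub_C (x k)]
    have h2 : j₀ ∈ E.filter (· < T) := by simp [hjE, hj₀]
    have h3 := Finset.card_erase_lt_of_mem h2
    have h4 := Finset.card_filter_le E (· < T)
    omega
  have h0 : ∑ j ∈ range T, P.eval (x j) * f j = 0 := by
    simp_rw [eval_eq_sum_range' hP, Finset.sum_mul]
    rw [Finset.sum_comm]
    refine Finset.sum_eq_zero fun s hs' => ?_
    simp_rw [mul_assoc]
    rw [← Finset.mul_sum, hs s (Finset.mem_range.1 hs'), mul_zero]
  rw [Finset.sum_eq_single_of_mem j₀ (Finset.mem_range.2 hj₀)] at h0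
  · refine (mul_eq_zero.1 h0).resolve_left ?_
    rw [eval_prod]
    refine Finset.prod_ne_zero_iff.2 ?_
    intro k hk
    simp only [Finset.mem_erase, Finset.mem_filter] at hk
    simpa [sub_eq_zero] using fun h => hk.1 (hx hk.2.2 hj₀ h.symm)
  · intro j hj hne
    have hjT := Finset.mem_range.1 hj
    by_cases hjE' : j ∈ E
    · have : P.eval (x j) = 0 := by
        rw [eval_prod]
        exact Finset.prod_eq_zero (i := j) (by simp [hne, hjE', hjT]) (by simp)
      rw [this, zero_mul]
    · rw [hf j hjT hjE', mul_zero]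

/-! ### The parity checks and their erasure patterns -/

/-- The parity checks of the code, on words written as functions on `ℕ` of which only the
positions `0, …, T + B - N` (that is, `n - 1`) matter. There are `B - N` diagonal checks, the
`i`-th one meeting the positions `i, i + B, …, i + aB` and `i + T`, with coefficient `α` at `i`
and `1` elsewhere. The remaining `N` checks form a Vandermonde matrix on the positions below `T`,
extended by the point at infinity at position `n - 1`. -/
structure ParityChecks {F : Type*} [Field F] (N B T a : ℕ) (x : ℕ → F) (α : F)
    (f : ℕ → F) : Prop where
  diag : ∀ i < B - N, α * f i + ∑ m ∈ range a, f (i + (m + 1) * B) + f (T + i) = 0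
  vand : ∀ s < N,
    ∑ j ∈ range T, x j ^ s * f j + (if s + 1 = N then f (T + (B - N)) else 0) = 0

/-- The Vandermonde checks form an MDS matrix on the positions below `T` together with `n - 1`; a
word with at most `N` nonzero entries there vanishes on these positions, and then on `T + i` for
`i < B - N` by the diagonal checks. -/
theorem ParityChecks.eq_zero_of_count {F : Type*} [Field F] {N B T a δ : ℕ} {x : ℕ → F} {α : F}
    {f : ℕ → F} (h : ParityChecks N B T a x α f) (hN : 1 ≤ N)
    (hT : T = a * B + δ) (hcase : B - N ≤ δ)
    (hx : Set.InjOn x (Set.Iio T)) (J : Finset ℕ)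
    (hJ : J.card ≤ N) (hf : ∀ j < T, j ∉ J → f j = 0)
    (hfinf : T + (B - N) ∉ J → f (T + (B - N)) = 0) :
    ∀ j ≤ T + (B - N), f j = 0 := by
  have hkey : (∀ j < T, f j = 0) ∧ f (T + (B - N)) = 0 := by
    by_cases hinf : f (T + (B - N)) = 0
    · refine ⟨eq_zero_of_power_sums hx J hJ hf fun s hs => ?_, hinf⟩
      simpa [hinf] using h.vand s hs
    · have hmem : T + (B - N) ∈ J := by by_contra hc; exact hinf (hfinf hc)
      have hall : ∀ j < T, f j = 0 := by
        refine eq_zero_of_power_sums (M := N - 1) hx (J.erase (T + (B - N))) ?_ ?_ ?_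
        · rw [Finset.card_erase_of_mem hmem]; omega
        · intro j hj hjJ
          refine hf j hj fun hc => hjJ (Finset.mem_erase.2 ⟨by omega, hc⟩)
        · intro s hs
          have := h.vand s (by omega)
          rwa [if_neg (by omega), add_zero] at this
      have hlast := h.vand (N - 1) (by omega)
      rw [if_pos (by omega), Finset.sum_eq_zero, zero_add] at hlast
      · exact absurd hlast hinf
      · intro j hj
        rw [hall j (Finset.mem_range.1 hj), mul_zero]
  obtain ⟨hlt, hinf⟩ := hkey
  intro j hj
  by_cases hjT : j < T
  · exact hlt j hjT
  by_cases hje : j = T + (B - N)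
  · rw [hje, hinf]
  have hd := h.diag (j - T) (by omega)
  have hadd : T + (j - T) = j := by omega
  rw [hlt (j - T) (by omega), Finset.sum_eq_zero, hadd] at hd
  · simpa using hd
  · intro m hm
    have h1 : (m + 1) * B ≤ a * B := Nat.mul_le_mul_right _ (by simpa using hm)
    exact hlt _ (by omega)

/-- A codeword supported on `B` consecutive positions is zero. Each of the `B - N` diagonal checks
either has its last position `i + T` in the burst, where the Vandermonde checks have no entry,
or it meets the burst in a single position, where the codeword must vanish. This leaves `N`
positions for the Vandermonde checks. -/
theorem ParityChecks.eq_zero_of_burst {F : Type*} [Field F] {N B T a δ : ℕ} {x : ℕ → F} {α : F}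
    {f : ℕ → F} (h : ParityChecks N B T a x α f) (hα : α ≠ 0) (hN : 1 ≤ N) (hNB : N ≤ B)
    (hδB : δ ≤ B) (hT : T = a * B + δ) (hcase : B - N ≤ δ)
    (hx : Set.InjOn x (Set.Iio T)) (u : ℕ) (hu : u + N ≤ T + 1)
    (hf : ∀ j ≤ T + (B - N), ¬ (u ≤ j ∧ j < u + B) → f j = 0) :
    ∀ j ≤ T + (B - N), f j = 0 := by
  classical
  have hlt : ∀ i < B - N, ∀ m ≤ a, i + m * B < T := by
    intro i hi m hm
    have h1 : m * B ≤ a * B := Nat.mul_le_mul_right _ hm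
    omega
  -- each of the `B - N` diagonal checks removes one position of the burst from the count
  have hk : ∀ i < B - N, ∃ k, u ≤ k ∧ k < u + B ∧
      (k = T + i ∨ (k < T ∧ k % B = i ∧ f k = 0)) := by
    intro i hi
    by_cases hTi : u ≤ T + i ∧ T + i < u + B
    · exact ⟨T + i, hTi.1, hTi.2, Or.inl rfl⟩
    have hTi' : u + B ≤ T + i := by omega
    -- the burst contains exactly one position congruent to `i` modulo `B`
    obtain ⟨m, hm1, hm2⟩ : ∃ m, u ≤ i + m * B ∧ i + m * B < u + B := by
      rcases Nat.lt_or_ge i u with hiu | hiu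
      · have hB : 0 < B := by omega
        refine ⟨(u - i + (B - 1)) / B, ?_, ?_⟩
        · have := Nat.div_add_mod (u - i + (B - 1)) B
          have := Nat.mod_lt (u - i + (B - 1)) hB
          rw [Nat.mul_comm _ B]; omega
        · have := Nat.div_add_mod (u - i + (B - 1)) B
          rw [Nat.mul_comm _ B]; omega
      · exact ⟨0, by omega, by omega⟩
    have hma : m ≤ a := by
      by_contra hc
      have h1 : (a + 1) * B ≤ m * B := Nat.mul_le_mul_right _ (by omega)
      rw [Nat.add_mul] at h1
      omega
    refine ⟨i + m * B, hm1, hm2, Or.inr ⟨hlt i hi m hma, ?_, ?_⟩⟩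
    · rw [Nat.add_mul_mod_self_right, Nat.mod_eq_of_lt (by omega)]
    have hother : ∀ m' ≤ a, m' ≠ m → f (i + m' * B) = 0 := by
      intro m' hm' hne
      refine hf _ (by have := hlt i hi m' hm'; omega) ?_
      rcases Nat.lt_or_gt_of_ne hne with hl | hl
      · have h1 : (m' + 1) * B ≤ m * B := Nat.mul_le_mul_right _ hl
        rw [Nat.add_mul] at h1; omega
      · have h1 : (m + 1) * B ≤ m' * B := Nat.mul_le_mul_right _ hl
        rw [Nat.add_mul] at h1; omega
    have hd := h.diag i hi
    rw [hf (T + i) (by omega) hTi, add_zero] at hd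
    rcases m with _ | m
    · rw [Finset.sum_eq_zero, add_zero] at hd
      · simpa [hα] using hd
      · intro m' hm'
        exact hother (m' + 1) (by simpa using hm') (by omega)
    · have h0 := hother 0 (by omega) (by omega)
      rw [Nat.zero_mul, Nat.add_zero] at h0
      rw [h0, mul_zero, zero_add, Finset.sum_eq_single_of_mem m (by simpa using hma)] at hd
      · exact hd
      · intro m' hm' hne
        exact hother (m' + 1) (by simpa using hm') (by omega)
  choose! k hk1 hk2 hk3 using hk
  have hinj : Set.InjOn k (range (B - N)) := by
    intro i hi i' hi' hii
    have hi := Finset.mem_range.1 hi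
    have hi' := Finset.mem_range.1 hi'
    have e1 := hk3 i hi
    have e2 := hk3 i' hi'
    rw [hii] at e1
    omega
  have hsub : (range (B - N)).image k ⊆ Finset.Ico u (u + B) := by
    intro j hj
    obtain ⟨i, hi, rfl⟩ := Finset.mem_image.1 hj
    have hi := Finset.mem_range.1 hi
    exact Finset.mem_Ico.2 ⟨hk1 i hi, hk2 i hi⟩
  refine h.eq_zero_of_count hN hT hcase hx (Finset.Ico u (u + B) \ (range (B - N)).image k)
    ?_ ?_ ?_
  · rw [Finset.card_sdiff_of_subset hsub, Finset.card_image_of_injOn hinj]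
    simp; omega
  · intro j hj hjn
    by_cases hju : u ≤ j ∧ j < u + B
    · have : j ∈ (range (B - N)).image k := by
        by_contra hc
        exact hjn (Finset.mem_sdiff.2 ⟨Finset.mem_Ico.2 hju, hc⟩)
      obtain ⟨i, hi, rfl⟩ := Finset.mem_image.1 this
      rcases hk3 i (Finset.mem_range.1 hi) with h1 | h1
      · omega
      · exact h1.2.2
    · exact hf j (by omega) hju
  · intro hjn
    refine hf _ le_rfl fun hju => hjn (Finset.mem_sdiff.2 ⟨Finset.mem_Ico.2 hju, fun hc => ?_⟩)
    obtain ⟨i, hi, hki⟩ := Finset.mem_image.1 hc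
    have hi := Finset.mem_range.1 hi
    have := hk3 i hi
    omega

/-- Recovery of an early symbol `i < B - N` from at most `N` erasures within its delay window
`0, …, i + T`; positions beyond the window are arbitrary. Here only the `i`-th diagonal check and
the first `N - 1` Vandermonde checks lie in the window. The latter determine the erased values up
to a common factor, with ratios in the field fixed by `φ`, so the diagonal check would make `α`
fixed by `φ` if the symbol were nonzero. -/
theorem ParityChecks.eq_zero_of_window {F : Type*} [Field F] {N B T a δ : ℕ} {x : ℕ → F} {α : F}
    {f : ℕ → F} (h : ParityChecks N B T a x α f) (φ : F →+* F) (hφx : ∀ j, φ (x j) = x j)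
    (hφα : φ α ≠ α) (hT : T = a * B + δ) (hcase : B - N ≤ δ)
    (hx : Set.InjOn x (Set.Iio T)) (i : ℕ) (hi : i < B - N) (E : Finset ℕ) (hE : E.card ≤ N)
    (hf : ∀ j ≤ i + T, j ∉ E → f j = 0) : f i = 0 := by
  by_contra hne
  have hiE : i ∈ E := by by_contra hc; exact hne (hf i (by omega) hc)
  have hlt : ∀ m ≤ a, i + m * B < T := by
    intro m hm
    have h1 : m * B ≤ a * B := Nat.mul_le_mul_right _ hm
    omega
  have hiT : i < T := by simpa using hlt 0 (by omega)
  have hs : ∀ s < N - 1, ∑ j ∈ range T, x j ^ s * f j = 0 := by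
    intro s hs
    have := h.vand s (by omega)
    rwa [if_neg (by omega), add_zero] at this
  by_cases hTi : T + i ∈ E
  · refine hne (eq_zero_of_power_sums (M := N - 1) hx (E.erase (T + i)) ?_ ?_ hs i hiT)
    · rw [Finset.card_erase_of_mem hTi]; omega
    · intro j hj hjE
      exact hf j (by omega) fun hc => hjE (Finset.mem_erase.2 ⟨by omega, hc⟩)
  have hfT : f (T + i) = 0 := hf _ (by omega) hTi
  -- normalise so that the value at `i` is `1`; then every value below `T` is fixed by `φ`
  have hfix : ∀ j < T, φ (f j / f i) = f j / f i := by
    intro j hj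
    rw [← sub_eq_zero]
    refine eq_zero_of_power_sums (f := fun j => φ (f j / f i) - f j / f i) (M := N - 1) hx
      (E.erase i) ?_ ?_ ?_ j hj
    · rw [Finset.card_erase_of_mem hiE]; omega
    · intro j hj hjE
      by_cases hji : j = i
      · subst hji; simp [div_self hne]
      · have : f j = 0 := hf j (by omega) fun hc => hjE (Finset.mem_erase.2 ⟨hji, hc⟩)
        simp [this]
    · intro s hs'
      have h1 : ∑ j ∈ range T, x j ^ s * (f j / f i) = 0 := by
        have := hs s hs'
        simp_rw [← mul_div_assoc]
        rw [← Finset.sum_div, this, zero_div]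
      have h2 := congrArg φ h1
      simp only [map_sum, map_mul, map_pow, hφx, map_zero] at h2
      simp only [mul_sub, Finset.sum_sub_distrib]
      rw [h1, h2, sub_zero]
  have hd := h.diag i hi
  rw [hfT, add_zero] at hd
  have hα : α = -∑ m ∈ range a, f (i + (m + 1) * B) / f i := by
    rw [← Finset.sum_div, eq_neg_iff_add_eq_zero]
    field_simp
    rw [hd, mul_zero]
  apply hφα
  rw [hα, map_neg, map_sum]
  congr 1
  refine Finset.sum_congr rfl fun m hm => hfix _ (hlt (m + 1) (by simpa using hm))

/-- Recovery of an early symbol `i < B - N` from a burst within its delay window: the positions of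
the `i`-th diagonal check other than `i` itself lie at distance at least `B` from `i`. -/
theorem ParityChecks.eq_zero_of_burst_window {F : Type*} [Field F] {N B T a δ : ℕ} {x : ℕ → F}
    {α : F} {f : ℕ → F} (h : ParityChecks N B T a x α f) (hα : α ≠ 0)
    (hBT : B ≤ T) (hT : T = a * B + δ) (hcase : B - N ≤ δ)
    (i : ℕ) (hi : i < B - N) (u v : ℕ) (huv : v - u + 1 ≤ B)
    (hf : ∀ j ≤ i + T, ¬ (u ≤ j ∧ j ≤ v) → f j = 0) : f i = 0 := by
  by_cases hiuv : u ≤ i ∧ i ≤ v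
  swap
  · exact hf i (by omega) hiuv
  have hd := h.diag i hi
  rw [hf (T + i) (by omega) (by omega), Finset.sum_eq_zero] at hd
  · simpa [hα] using hd
  · intro m hm
    have h1 : (m + 1) * B ≤ a * B := Nat.mul_le_mul_right _ (by simpa using hm)
    rw [Nat.add_mul] at *
    refine hf _ (by omega) ?_
    have : m * B ≥ 0 := Nat.zero_le _
    omega

/-! ### The code -/

/-- The `j`-th coordinate functional on `F^n`, indexed by `ℕ`; it is zero for `j ≥ n`. -/
noncomputable def coordMap (F : Type*) [Field F] (n j : ℕ) : (Fin n → F) →ₗ[F] F :=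
  if h : j < n then LinearMap.proj ⟨j, h⟩ else 0

theorem coordMap_of_lt {F : Type*} [Field F] {n : ℕ} (c : Fin n → F) (j : ℕ) (h : j < n) :
    coordMap F n j c = c ⟨j, h⟩ := by
  simp [coordMap, h]

/-- The parity-check matrix of the construction as a linear map; its kernel is the code, and its
rows are those of `ParityChecks`. -/
noncomputable def checkMap {F : Type*} [Field F] (n N B T a : ℕ) (x : ℕ → F) (α : F) :
    (Fin n → F) →ₗ[F] (Fin (B - N) ⊕ Fin N → F) :=
  LinearMap.pi (Sum.elim
    (fun i => α • coordMap F n i + ∑ m ∈ range a, coordMap F n (i + (m + 1) * B) +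
      coordMap F n (T + i))
    (fun s => ∑ j ∈ range T, x j ^ (s : ℕ) • coordMap F n j +
      if (s : ℕ) + 1 = N then coordMap F n (T + (B - N)) else 0))

theorem mem_ker_checkMap {F : Type*} [Field F] {n N B T a : ℕ} {x : ℕ → F} {α : F}
    {c : Fin n → F} :
    c ∈ LinearMap.ker (checkMap n N B T a x α) ↔
      ParityChecks N B T a x α (fun j => coordMap F n j c) := by
  rw [LinearMap.mem_ker]
  constructor
  · intro h
    refine ⟨fun i hi => ?_, fun s hs => ?_⟩
    · simpa [checkMap] using congrFun h (Sum.inl ⟨i, hi⟩)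
    · have := congrFun h (Sum.inr ⟨s, hs⟩)
      split_ifs with hsN <;> simpa [checkMap, hsN] using this
  · intro h
    funext r
    rcases r with i | s
    · simpa [checkMap] using h.diag i i.2
    · have := h.vand s s.2
      by_cases hsN : (s : ℕ) + 1 = N <;> simpa [checkMap, hsN] using this

/-- The parity-check matrix has full rank `B`, since its first `B` columns are independent: they
are a burst of length `B`. -/
theorem finrank_ker_checkMap {F : Type*} [Field F] {n N B T a δ : ℕ} {x : ℕ → F} {α : F}
    (hn : n = B + T - N + 1) (hα : α ≠ 0) (hN : 1 ≤ N) (hNB : N ≤ B)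
    (hBT : B ≤ T) (hδB : δ ≤ B) (hT : T = a * B + δ) (hcase : B - N ≤ δ)
    (hx : Set.InjOn x (Set.Iio T)) :
    Module.finrank F (LinearMap.ker (checkMap n N B T a x α)) = T - N + 1 := by
  have hBn : B ≤ n := by omega
  let ext : (Fin B → F) →ₗ[F] (Fin n → F) := LinearMap.pi fun j => coordMap F B j
  have hinj : Function.Injective ((checkMap n N B T a x α).comp ext) := by
    rw [← LinearMap.ker_eq_bot, LinearMap.ker_eq_bot']
    intro b hb
    have hpc := mem_ker_checkMap.1 (LinearMap.mem_ker.2 hb)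
    have hz := hpc.eq_zero_of_burst hα hN hNB hδB hT hcase hx 0 (by omega) (by
      intro j hj hjB
      rw [coordMap_of_lt _ j (by omega)]
      simp [ext, coordMap, show ¬ j < B by omega])
    funext j
    have := hz j (by omega)
    rw [coordMap_of_lt _ (j : ℕ) (by omega)] at this
    simpa [ext, coordMap] using this
  have hdim : Module.finrank F (Fin B → F) =
      Module.finrank F (Fin (B - N) ⊕ Fin N → F) := by
    simp; omega
  have hsurj : Function.Surjective (checkMap n N B T a x α) :=
    Function.Surjective.of_comp
      ((LinearMap.injective_iff_surjective_of_finrank_eq_finrank hdim).1 hinj)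
  have hrn := LinearMap.finrank_range_add_finrank_ker (checkMap n N B T a x α)
  rw [LinearMap.range_eq_top.2 hsurj, finrank_top, ← hdim] at hrn
  simp only [Module.finrank_fin_fun] at hrn
  omega

theorem conforms_ker_checkMap {F : Type*} [Field F] {n N B T a δ : ℕ} {x : ℕ → F} {α : F}
    (hn : n = B + T - N + 1) (φ : F →+* F) (hφx : ∀ j, φ (x j) = x j)
    (hφα : φ α ≠ α) (hN : 1 ≤ N) (hNB : N ≤ B)
    (hBT : B ≤ T) (hδB : δ ≤ B) (hT : T = a * B + δ) (hcase : B - N ≤ δ)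
    (hx : Set.InjOn x (Set.Iio T)) :
    Conforms (LinearMap.ker (checkMap n N B T a x α)) N B T := by
  have hα : α ≠ 0 := by rintro rfl; simp at hφα
  refine fun i => ⟨fun E hE => ?_, fun u v huv hvn hlen => ?_⟩
  · refine recoverable_of_vanishing _ i _ fun c hc hvan => ?_
    have hpc := mem_ker_checkMap.1 hc
    have hcard : (E.map Fin.valEmbedding).card ≤ N := by rwa [Finset.card_map]
    have hsupp : ∀ j ≤ min (i.val + T) (n - 1), j ∉ E.map Fin.valEmbedding →
        coordMap F n j c = 0 := by
      intro j hj hjE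
      have hjn : j < n := by have := i.2; omega
      rw [coordMap_of_lt c j hjn]
      refine hvan _ (Finset.mem_sdiff.2 ⟨by simpa using hj, fun hc => hjE ?_⟩)
      exact Finset.mem_map.2 ⟨_, hc, rfl⟩
    have hi := coordMap_of_lt c i.val i.2
    rw [← show coordMap F n i.val c = c i from hi]
    by_cases hid : i.val < B - N
    · exact hpc.eq_zero_of_window φ hφx hφα hT hcase hx i hid _ hcard
        fun j hj hjE => hsupp j (by omega) hjE
    · refine hpc.eq_zero_of_count hN hT hcase hx _ hcard
        (fun j hj => hsupp j (by omega)) (hsupp _ (by omega)) i (by have := i.2; omega)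
  · refine recoverable_of_vanishing _ i _ fun c hc hvan => ?_
    have hpc := mem_ker_checkMap.1 hc
    have hsupp : ∀ j ≤ min (i.val + T) (n - 1), ¬ (u ≤ j ∧ j ≤ v) →
        coordMap F n j c = 0 := by
      intro j hj hjE
      have hjn : j < n := by have := i.2; omega
      rw [coordMap_of_lt c j hjn]
      exact hvan _ (Finset.mem_filter.2 ⟨Finset.mem_univ _, hj, hjE⟩)
    have hi := coordMap_of_lt c i.val i.2
    rw [← show coordMap F n i.val c = c i from hi]
    by_cases hid : i.val < B - N
    · exact hpc.eq_zero_of_burst_window hα hBT hT hcase i hid u v hlen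
        fun j hj hjE => hsupp j (by omega) hjE
    · -- shift the burst left, if necessary, so that `B` full positions fit into the block
      refine hpc.eq_zero_of_burst hα hN hNB hδB hT hcase hx (min u (n - B)) (by omega)
        (fun j hj hju => hsupp j (by omega) (by omega)) i (by have := i.2; omega)

theorem constructionA_exists
    (N B T a δ : ℕ) (hN : 1 ≤ N) (hNB : N ≤ B) (hBT : B ≤ T)
    (hδ1 : 1 ≤ δ) (hδB : δ ≤ B) (hT : T = a * B + δ) (hcase : B - N ≤ δ)
    (p e : ℕ) [Fact p.Prime] (he : 1 ≤ e) (hq : T + 1 ≤ p ^ e) :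
    ∃ C : Submodule (GaloisField p (2 * e))
        (Fin (B + T - N + 1) → GaloisField p (2 * e)),
      Module.finrank (GaloisField p (2 * e)) C = T - N + 1 ∧ Conforms C N B T := by
  obtain ⟨x, α, hx, hφx, hφα⟩ := exists_points p e T he (by omega)
  have hα : α ≠ 0 := by rintro rfl; simp at hφα
  exact ⟨LinearMap.ker (checkMap _ N B T a x α),
    finrank_ker_checkMap rfl hα hN hNB hBT hδB hT hcase hx,
    conforms_ker_checkMap rfl _ hφx hφα hN hNB hBT hδB hT hcase hx⟩
end

section
/- Construction-A burst-erasure recovery: Let C be a Construction-A code with parameters N, B, T (with δ ≥ B−N), n = B+T−N+1 and k = T−N+1, and let Δ_i = min(i+T, n−1). Then for every i ∈ {0,…,n−1} and every interval [u,v] ⊆ {0,…,n−1} with v − u + 1 ≤ B, the i-th coordinate of C is recoverable from {0,…,Δ_i} \ [u,v]; that is, C corrects any erasure burst of length at most B with decoding delay at most T. -/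
/-!
The code is a linear subspace, so by duality a coordinate is recoverable from a finite set `I` as
soon as every codeword vanishing on `I` vanishes at that coordinate (`recoverableFrom_of_forall`).

The parity `c (T + r)` with `r < B - N` is a combination, with nonzero coefficients, of exactly the
symbols `c j` with `j < T` and `j ≡ r [MOD B]`. A burst of length at most `B` hits at most one
position of each residue class, so an intact parity recovers the symbol of its class hit by the
burst (`eq_zero_of_parity`).

If the erased position `i` satisfies `i < B - N`, then the parity at `i + T` is available within the
allowed delay and lies beyond the burst, so it recovers `c i`. Otherwise the delay bound allows the
whole codeword to be read, and counting shows that at most `N` of the `T + 1` MDS symbols stay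
unknown after the parities are used; the MDS property then recovers everything
(`eq_zero_of_card_le`). The count depends on where the burst ends: among the first `T` symbols,
among the parities, or at the last symbol.
-/

open Finset

/-- For a set `C` of (ℕ-indexed) codewords over `L`, coordinate `i` is recoverable from the
finite coordinate set `I`: there exist scalars `λ_j` with `c_i = ∑_{j ∈ I} λ_j c_j` for
every `c ∈ C`. -/
def RecoverableFrom {L : Type*} [Field L] (C : Set (ℕ → L)) (i : ℕ) (I : Finset ℕ) : Prop :=
  ∃ lam : ℕ → L, ∀ c ∈ C, c i = ∑ j ∈ I, lam j * c j

/-- The Construction-A code with parameters `N, B, T` (where `T = aB + δ`, `δ ≥ B - N`),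
over `L = F_{q²}` with base subfield `K = F_q`, built from `α ∈ L \ K` and a `k × (T+1)`
generator matrix `G` (entries in `K`) of a `[T+1, k]` MDS code, `k = T - N + 1`:
`c_j = (mG)_j` for `0 ≤ j ≤ T-1`, `c_{n-1} = (mG)_T` where `n = B + T - N + 1`, and
`c_{T+j} = α c_j + c_{j+B} + ⋯ + c_{j+aB}` for `0 ≤ j ≤ B - N - 1`. -/
def ConstructionA {L : Type*} [Field L] (N B T a : ℕ) (α : L)
    (G : Fin (T - N + 1) → ℕ → L) : Set (ℕ → L) :=
  { c : ℕ → L | ∃ m : Fin (T - N + 1) → L,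
      (∀ j < T, c j = ∑ i, m i * G i j) ∧
      (c (B + T - N) = ∑ i, m i * G i T) ∧
      (∀ j < B - N, c (T + j) = α * c j + ∑ ℓ ∈ Finset.Icc 1 a, c (j + ℓ * B)) }

/-!
Construction-A burst-erasure recovery: with `Δ_i = min (i+T) (n-1)`, `n = B + T - N + 1`,
every coordinate `i ∈ {0,…,n-1}` is recoverable from `{0,…,Δ_i} \ [u,v]` for every interval
`[u,v] ⊆ {0,…,n-1}` with `v - u + 1 ≤ B`; i.e. Construction A corrects any erasure burst of
length at most `B` with decoding delay at most `T`.
-/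

/-- Duality: on a linear code, a coordinate that vanishes on every codeword vanishing on `I` is a
fixed linear combination of the coordinates in `I`. -/
lemma recoverableFrom_of_forall {L : Type*} [Field L] (W : Submodule L (ℕ → L)) (i : ℕ)
    (I : Finset ℕ) (h : ∀ c ∈ W, (∀ j ∈ I, c j = 0) → c i = 0) :
    RecoverableFrom (W : Set (ℕ → L)) i I := by
  have key := mem_span_of_iInf_ker_le_ker (𝕜 := L)
    (L := fun j : I => (LinearMap.proj (R := L) (φ := fun _ : ℕ => L) (j : ℕ)) ∘ₗ W.subtype)
    (K := (LinearMap.proj (R := L) (φ := fun _ : ℕ => L) i) ∘ₗ W.subtype) (by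
      intro c hc
      simp only [Submodule.mem_iInf, LinearMap.mem_ker] at hc ⊢
      exact h c c.2 fun j hj => hc ⟨j, hj⟩)
  obtain ⟨lam, hlam⟩ := (Submodule.mem_span_range_iff_exists_fun L).1 key
  refine ⟨fun j => if hj : j ∈ I then lam ⟨j, hj⟩ else 0, fun c hc => ?_⟩
  have h1 := LinearMap.congr_fun hlam ⟨c, hc⟩
  simp only [LinearMap.sum_apply, LinearMap.smul_apply, LinearMap.comp_apply,
    LinearMap.proj_apply, Submodule.subtype_apply, smul_eq_mul] at h1
  rw [← h1, ← Finset.sum_coe_sort I]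
  exact Finset.sum_congr rfl fun j _ => by simp

/-- The Construction-A code as a linear subspace of the sequences `ℕ → L`. -/
def constructionASubmodule {L : Type*} [Field L] (N B T a : ℕ) (α : L)
    (G : Fin (T - N + 1) → ℕ → L) : Submodule L (ℕ → L) where
  carrier := ConstructionA N B T a α G
  zero_mem' := ⟨0, by simp, by simp, by simp⟩
  add_mem' := by
    rintro c d ⟨m, h1, h2, h3⟩ ⟨m', h1', h2', h3'⟩
    refine ⟨m + m', fun j hj => ?_, ?_, fun j hj => ?_⟩
    · simp [h1 j hj, h1' j hj, add_mul, Finset.sum_add_distrib]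
    · simp [h2, h2', add_mul, Finset.sum_add_distrib]
    · simp only [Pi.add_apply, h3 j hj, h3' j hj, Finset.sum_add_distrib]
      ring
  smul_mem' := by
    rintro x c ⟨m, h1, h2, h3⟩
    refine ⟨x • m, fun j hj => ?_, ?_, fun j hj => ?_⟩
    · simp [h1 j hj, Finset.mul_sum, mul_assoc]
    · simp [h2, Finset.mul_sum, mul_assoc]
    · simp only [Pi.smul_apply, h3 j hj, smul_eq_mul, mul_add, ← Finset.mul_sum]
      ring

/-- MDS decoding: a message whose codeword has at most `N` nonzero symbols is zero. -/
lemma eq_zero_of_card_le {L : Type*} [Field L] {N T : ℕ} (hNT : N ≤ T)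
    (G : Fin (T - N + 1) → ℕ → L)
    (hMDS : ∀ S : Finset ℕ, S ⊆ Finset.range (T + 1) → S.card = T - N + 1 →
      LinearIndependent L (fun j : S => fun i => G i (j : ℕ)))
    (m : Fin (T - N + 1) → L) (E : Finset ℕ) (hE : E.card ≤ N)
    (h : ∀ j ≤ T, j ∉ E → ∑ i, m i * G i j = 0) : m = 0 := by
  have hcard : T - N + 1 ≤ (Finset.range (T + 1) \ E).card := by
    have := Finset.le_card_sdiff E (Finset.range (T + 1))
    rw [Finset.card_range] at this
    omega
  obtain ⟨S, hS, hSc⟩ := Finset.exists_subset_card_eq hcard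
  have hli := hMDS S (hS.trans Finset.sdiff_subset) hSc
  have hspan := hli.span_eq_top_of_card_eq_finrank' (by simp [hSc])
  -- The functional `w ↦ ∑ m i * w i` kills a spanning set, hence is zero.
  have hzero : (Fintype.linearCombination L m : (Fin (T - N + 1) → L) →ₗ[L] L) = 0 := by
    refine LinearMap.ext_on_range hspan fun j => ?_
    have hj := hS j.2
    simp only [Finset.mem_sdiff, Finset.mem_range] at hj
    have := h j (by omega) hj.2
    simpa [Fintype.linearCombination_apply, mul_comm] using this
  funext t
  have := LinearMap.congr_fun hzero (Pi.single t 1)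
  simpa [Fintype.linearCombination_apply, Pi.single_apply] using this

/-- An intact zero parity `T + r` forces the symbol of residue class `r` hit by a burst of length
at most `B` to vanish, once the symbols outside the burst vanish. -/
lemma eq_zero_of_parity {L : Type*} [Field L] {N B T a δ u v : ℕ} {α : L} (hα : α ≠ 0)
    (hT : T = a * B + δ) (hcase : B - N ≤ δ)
    (hburst : v - u + 1 ≤ B) (c : ℕ → L)
    (hpar : ∀ j < B - N, c (T + j) = α * c j + ∑ ℓ ∈ Finset.Icc 1 a, c (j + ℓ * B))
    (hc : ∀ j < T, j ∉ Finset.Icc u v → c j = 0)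
    (r s : ℕ) (hr : r < B - N) (hs : s ≤ a) (hrz : c (T + r) = 0) : c (r + s * B) = 0 := by
  have hlt : ∀ ℓ ≤ a, r + ℓ * B < T := fun ℓ hℓ => by
    have := Nat.mul_le_mul_right B hℓ
    omega
  by_cases hj : r + s * B ∈ Finset.Icc u v
  swap
  · exact hc _ (hlt s hs) hj
  rw [Finset.mem_Icc] at hj
  -- Distinct positions of one residue class are at least `B` apart.
  have hother : ∀ ℓ ≤ a, ℓ ≠ s → c (r + ℓ * B) = 0 := fun ℓ hℓ hne => by
    refine hc _ (hlt ℓ hℓ) fun hmem => ?_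
    rw [Finset.mem_Icc] at hmem
    rcases Nat.lt_or_gt_of_ne hne with h | h
    · have := Nat.mul_le_mul_right B (Nat.succ_le_of_lt h)
      rw [Nat.succ_mul] at this
      omega
    · have := Nat.mul_le_mul_right B (Nat.succ_le_of_lt h)
      rw [Nat.succ_mul] at this
      omega
  have hp := hpar r hr
  rw [hrz] at hp
  rcases Nat.eq_zero_or_pos s with rfl | hspos
  · rw [Finset.sum_eq_zero, add_zero] at hp
    · simpa [hα] using hp.symm
    · intro ℓ hℓ
      rw [Finset.mem_Icc] at hℓ
      exact hother ℓ hℓ.2 (by omega)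
  · have h0 : c r = 0 := by simpa using hother 0 (Nat.zero_le _) (by omega)
    rw [h0, mul_zero, zero_add, Finset.sum_eq_single s] at hp
    · exact hp.symm
    · intro ℓ hℓ hne
      rw [Finset.mem_Icc] at hℓ
      exact hother ℓ hℓ.2 hne
    · intro hn
      exact absurd (Finset.mem_Icc.2 ⟨hspos, hs⟩) hn

theorem constructionA_burst_recovery
    {L : Type*} [Field L] [Fintype L]
    (p e N B T a δ : ℕ) (hp : p.Prime) (he : 1 ≤ e)
    (hN : 1 ≤ N) (hNB : N ≤ B) (hBT : B ≤ T)
    (hδ1 : 1 ≤ δ) (hδB : δ ≤ B) (hT : T = a * B + δ) (hcase : B - N ≤ δ)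
    (hcardL : Fintype.card L = (p ^ e) ^ 2)
    (K : Subfield L) (hcardK : Nat.card K = p ^ e)
    (α : L) (hα : α ∉ K)
    (G : Fin (T - N + 1) → ℕ → L)
    (hGK : ∀ i j, j ≤ T → G i j ∈ K)
    (hMDS : ∀ S : Finset ℕ, S ⊆ Finset.range (T + 1) → S.card = T - N + 1 →
      LinearIndependent L (fun j : S => fun i => G i (j : ℕ)))
    (i : ℕ) (hi : i ≤ B + T - N)
    (u v : ℕ) (huv : u ≤ v) (hv : v ≤ B + T - N) (hburst : v - u + 1 ≤ B) :
    RecoverableFrom (ConstructionA N B T a α G) i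
      (Finset.range (min (i + T) (B + T - N) + 1) \ Finset.Icc u v) := by
  have hα0 : α ≠ 0 := fun h => hα (h ▸ K.zero_mem)
  refine recoverableFrom_of_forall (constructionASubmodule N B T a α G) i _ ?_
  rintro c ⟨m, hsrc, hlast, hpar⟩ hzero
  replace hzero : ∀ j ≤ i + T, j ≤ B + T - N → j ∉ Finset.Icc u v → c j = 0 :=
    fun j h1 h2 h3 => hzero j (by
      rw [Finset.mem_sdiff, Finset.mem_range]
      exact ⟨by omega, h3⟩)
  by_cases hiuv : i ∈ Finset.Icc u v
  swap
  · exact hzero i (by omega) hi hiuv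
  have hiuv' := Finset.mem_Icc.1 hiuv
  have hrec := eq_zero_of_parity hα0 hT hcase hburst c hpar
    (fun j hj hj' => hzero j (by omega) (by omega) hj')
  by_cases hiB : i < B - N
  · -- The parity at `i + T ≥ u + B` lies beyond the burst.
    have := hrec i 0 hiB (Nat.zero_le _)
      (hzero _ (by omega) (by omega) (by rw [Finset.mem_Icc]; omega))
    simpa using this
  have hz : ∀ j ≤ B + T - N, j ∉ Finset.Icc u v → c j = 0 :=
    fun j hj hj' => hzero j (by omega) hj hj'
  -- `E` contains every index of an MDS symbol that is not yet known to vanish.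
  obtain ⟨E, hEc, hE, hET⟩ : ∃ E : Finset ℕ, E.card ≤ N ∧ (∀ j < T, j ∉ E → c j = 0) ∧
      (T ∉ E → c (B + T - N) = 0) := by
    rcases Nat.lt_or_ge v T with hvT | hvT
    · -- Every parity is intact, so unknown symbols lie in the residue classes `B - N, …, B - 1`.
      refine ⟨(Finset.Icc u v).filter (fun j => B - N ≤ j % B), ?_, ?_, ?_⟩
      · have hle : ((Finset.Icc u v).filter (fun j => B - N ≤ j % B)).card ≤
            (Finset.Ico (B - N) B).card := by
          refine Finset.card_le_card_of_injOn (fun j => j % B) ?_ ?_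
          · intro j hj
            simp only [Finset.coe_filter, Set.mem_ofPred_eq] at hj
            simp only [Finset.coe_Ico, Set.mem_Ico]
            exact ⟨hj.2, Nat.mod_lt _ (by omega)⟩
          · intro j hj j' hj' hjj
            simp only [Finset.coe_filter, Set.mem_ofPred_eq, Finset.mem_Icc] at hj hj'
            have hmod : j ≡ j' [MOD B] := hjj
            rcases Nat.le_total j j' with h | h
            · have := Nat.eq_zero_of_dvd_of_lt ((Nat.modEq_iff_dvd' h).1 hmod) (by omega)
              omega
            · have := Nat.eq_zero_of_dvd_of_lt ((Nat.modEq_iff_dvd' h).1 hmod.symm) (by omega)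
              omega
        rw [Nat.card_Ico] at hle
        omega
      · intro j hj hjE
        by_cases hjuv : j ∈ Finset.Icc u v
        swap
        · exact hz j (by omega) hjuv
        have hr : j % B < B - N := by
          by_contra hcon
          exact hjE (Finset.mem_filter.2 ⟨hjuv, by omega⟩)
        have hdiv : j / B ≤ a := by
          refine Nat.le_of_lt_succ ((Nat.div_lt_iff_lt_mul (by omega)).2 ?_)
          rw [Nat.succ_mul]
          omega
        have := hrec (j % B) (j / B) hr hdiv
          (hz _ (by omega) (by rw [Finset.mem_Icc]; omega))
        rwa [Nat.mul_comm, Nat.mod_add_div] at this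
      · intro _
        exact hz _ le_rfl (by rw [Finset.mem_Icc]; omega)
    · rcases Nat.lt_or_ge v (B + T - N) with hvn | hvn
      · -- The parities `v + 1, …, T + B - N - 1` are intact; with `v = T + s`, they recover the
        -- positions `a * B + r` for `s < r < B - N`.
        refine ⟨Finset.Icc (v + 1 - B) (T - 1) \
          Finset.Ico (a * B + (v - T) + 1) (a * B + (B - N)), ?_, ?_, ?_⟩
        · rw [Finset.card_sdiff_of_subset]
          · rw [Nat.card_Icc, Nat.card_Ico]
            omega
          · intro j hj
            rw [Finset.mem_Ico] at hj
            rw [Finset.mem_Icc]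
            omega
        · intro j hj hjE
          by_cases hjuv : j ∈ Finset.Icc u v
          swap
          · exact hz j (by omega) hjuv
          rw [Finset.mem_Icc] at hjuv
          simp only [Finset.mem_sdiff, Finset.mem_Icc, Finset.mem_Ico, not_and] at hjE
          have hj2 := hjE (by omega)
          have := hrec (j - a * B) a (by omega) le_rfl
            (hz _ (by omega) (by rw [Finset.mem_Icc]; omega))
          rwa [Nat.sub_add_cancel (by omega)] at this
        · intro _
          exact hz _ le_rfl (by rw [Finset.mem_Icc]; omega)
      · -- The burst ends at the last symbol, so it meets at most `N` MDS symbols.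
        refine ⟨Finset.Icc (T - N + 1) T, ?_, ?_, ?_⟩
        · rw [Nat.card_Icc]
          omega
        · intro j hj hjE
          rw [Finset.mem_Icc] at hjE
          exact hz j (by omega) (by rw [Finset.mem_Icc]; omega)
        · intro h
          rw [Finset.mem_Icc] at h
          omega
  have hm : m = 0 := by
    refine eq_zero_of_card_le (by omega) G hMDS m E hEc fun j hj hjE => ?_
    rcases Nat.lt_or_eq_of_le hj with h | rfl
    · rw [← hsrc j h]
      exact hE j h hjE
    · rw [← hlast]
      exact hET hjE
  have hall : ∀ j < T, c j = 0 := fun j hj => by simp [hsrc j hj, hm]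
  rcases Nat.lt_or_ge i T with h | h
  · exact hall i h
  rcases Nat.lt_or_eq_of_le hi with h' | h'
  · obtain ⟨r, rfl⟩ := Nat.exists_eq_add_of_le h
    rw [hpar r (by omega), hall r (by omega), mul_zero, zero_add]
    refine Finset.sum_eq_zero fun ℓ hℓ => hall _ ?_
    have := Nat.mul_le_mul_right B (Finset.mem_Icc.1 hℓ).2
    omega
  · rw [h', hlast, hm]
    simp
end

section
/- Construction-A recovery from N arbitrary erasures: Let C be a Construction-A code with parameters N, B, T (with δ ≥ B−N), n = B+T−N+1 and k = T−N+1, and let Δ_i = min(i+T, n−1). Then for every i ∈ {0,…,n−1} and every set 𝒩 ⊆ {0,…,n−1} with |𝒩| ≤ N, the i-th coordinate of C is recoverable from {0,…,Δ_i} \ 𝒩; that is, C corrects any N arbitrary erasures with decoding delay at most T. -/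
/-!
Every coordinate of a codeword is a linear functional of the message `m`, so the coordinate `i`
is recoverable from `I` as soon as every message whose codeword vanishes on `I` has a codeword
vanishing at `i` (`recoverableFrom_of_forall_eq_zero`).

By the MDS property over the subfield `K`, any `k = T - N + 1` columns of `G` form a basis of
`K ^ k`, so every column is a combination of them *with coefficients in `K`*
(`exists_subfield_combination`). In particular a message orthogonal to `k` columns is orthogonal
to all of them, and its codeword is zero. This settles all cases in which at least `k` unerased
coordinates within the delay window are columns of `G`.

Otherwise `i < B - N`, the erasures are `N` of the first `T` coordinates, and (unless there is
nothing to prove) `i` is among them. The check `c_{T+i} = α c_i + ∑ c_{i+ℓB}` is available, and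
`B - N ≤ δ` ensures that all of its indices `i + ℓB` are below `T`. If the codeword vanishes on the
`T - N = k - 1` unerased columns, then expanding over the basis they form with column `i` gives
`∑ c_{i+ℓB} = κ c_i` with `κ ∈ K`. The vanishing check reads `(α + κ) c_i = 0`, and
`α + κ ≠ 0` because `α ∉ K`; hence `c_i = 0`.
-/

open Finset

/-- Duality: a functional vanishing on the common kernel of finitely many functionals is a linear
combination of them. -/
lemma recoverableFrom_of_forall_eq_zero {L V : Type*} [Field L] [AddCommGroup V] [Module L V]
    (C : Set (ℕ → L)) (i : ℕ) (I : Finset ℕ) (φ : ℕ → V →ₗ[L] L)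
    (hC : ∀ c ∈ C, ∃ m, c i = φ i m ∧ ∀ j ∈ I, c j = φ j m)
    (h : ∀ m, (∀ j ∈ I, φ j m = 0) → φ i m = 0) : RecoverableFrom C i I := by
  have hmem : φ i ∈ Submodule.span L (Set.range fun j : I => φ j) := by
    apply mem_span_of_iInf_ker_le_ker
    intro m hm
    simp only [Submodule.mem_iInf, LinearMap.mem_ker, Subtype.forall] at hm ⊢
    exact h m hm
  obtain ⟨l, hl⟩ := (Submodule.mem_span_range_iff_exists_fun L).1 hmem
  refine ⟨fun j => if hj : j ∈ I then l ⟨j, hj⟩ else 0, fun c hc => ?_⟩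
  obtain ⟨m, hi, hm⟩ := hC c hc
  rw [hi, ← hl, ← Finset.sum_coe_sort I, LinearMap.sum_apply]
  refine Finset.sum_congr rfl fun j _ => ?_
  simp [hm j j.2]

/-- The subfield `K` matters here: the columns are independent over `L`, but the coefficients of
the expansion lie in `K`. -/
lemma exists_subfield_combination {L : Type*} [Field L] {k T : ℕ} (K : Subfield L)
    (G : Fin k → ℕ → L) (hGK : ∀ i j, j ≤ T → G i j ∈ K)
    (S : Finset ℕ) (hS : S ⊆ range (T + 1)) (hcard : S.card = k)
    (hind : LinearIndependent L (fun j : S => fun i => G i (j : ℕ)))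
    (j : ℕ) (hj : j ≤ T) :
    ∃ κ : ℕ → K, ∀ r, G r j = ∑ s ∈ S, (κ s : L) * G r s := by
  -- The columns with entries in `K`; the value `0` for indices beyond `T` is never used.
  let g : ℕ → Fin k → K := fun j r => if h : j ≤ T then ⟨G r j, hGK r j h⟩ else 0
  have hg : ∀ j ≤ T, ∀ r, (g j r : L) = G r j := by
    intro j hj r
    simp [g, hj]
  have hST : ∀ s ∈ S, s ≤ T := fun s hs => by
    have := mem_range.1 (hS hs)
    omega
  have hindK : LinearIndependent K (fun s : S => g s) := by
    rw [Fintype.linearIndependent_iff] at hind ⊢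
    intro l hl s
    have h0 := hind (fun s => (l s : L)) (by
      funext r
      have := congrArg (Subtype.val) (congrFun hl r)
      simp only [Finset.sum_apply, Pi.smul_apply, smul_eq_mul, Pi.zero_apply] at this ⊢
      push_cast at this
      rw [← this]
      exact Finset.sum_congr rfl fun s _ => by rw [hg s (hST s s.2)]) s
    exact Subtype.ext h0
  have htop := hindK.span_eq_top_of_card_eq_finrank' (by simp [hcard])
  have hmem : g j ∈ Submodule.span K (Set.range fun s : S => g s) := htop ▸ Submodule.mem_top
  obtain ⟨l, hl⟩ := (Submodule.mem_span_range_iff_exists_fun K).1 hmem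
  refine ⟨fun s => if hs : s ∈ S then l ⟨s, hs⟩ else 0, fun r => ?_⟩
  have := congrArg (Subtype.val) (congrFun hl r)
  simp only [Finset.sum_apply, Pi.smul_apply, smul_eq_mul] at this
  push_cast at this
  rw [hg j hj] at this
  rw [← this, ← Finset.sum_coe_sort S]
  exact Finset.sum_congr rfl fun s _ => by simp [hg s (hST s s.2)]

/-- The functional sending a message `m` to the entry `j` of `mG`. -/
def columnFunctional {L : Type*} [Field L] {k : ℕ} (G : Fin k → ℕ → L) (j : ℕ) :
    (Fin k → L) →ₗ[L] L :=
  ∑ r, G r j • LinearMap.proj r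

lemma columnFunctional_apply {L : Type*} [Field L] {k : ℕ} (G : Fin k → ℕ → L) (j : ℕ)
    (m : Fin k → L) : columnFunctional G j m = ∑ r, m r * G r j := by
  simp [columnFunctional, mul_comm]

lemma columnFunctional_combination {L : Type*} [Field L] {k : ℕ} (G : Fin k → ℕ → L)
    (S : Finset ℕ) (κ : ℕ → L) (j : ℕ) (h : ∀ r, G r j = ∑ s ∈ S, κ s * G r s)
    (m : Fin k → L) :
    columnFunctional G j m = ∑ s ∈ S, κ s * columnFunctional G s m := by
  simp only [columnFunctional_apply, h, Finset.mul_sum]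
  rw [Finset.sum_comm]
  exact Finset.sum_congr rfl fun s _ => Finset.sum_congr rfl fun r _ => by ring

/-- The coordinate `j` of the Construction-A codeword as a functional of the message, for
`j ≤ B + T - N`; all larger indices repeat the last coordinate. -/
def coordinateFunctional {L : Type*} [Field L] (N B T a : ℕ) (α : L) {k : ℕ}
    (G : Fin k → ℕ → L) (j : ℕ) : (Fin k → L) →ₗ[L] L :=
  if j < T then columnFunctional G j
  else if j < B + T - N then
    α • columnFunctional G (j - T) + ∑ l ∈ Icc 1 a, columnFunctional G (j - T + l * B)
  else columnFunctional G T

/-!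
Construction-A recovery from `N` arbitrary erasures: with `Δ_i = min (i+T) (n-1)`,
`n = B + T - N + 1`, every coordinate `i ∈ {0,…,n-1}` is recoverable from `{0,…,Δ_i} \ 𝒩`
for every `𝒩 ⊆ {0,…,n-1}` with `|𝒩| ≤ N`; i.e. Construction A corrects any `N` arbitrary
erasures with decoding delay at most `T`.
-/

theorem constructionA_arbitrary_erasure_recovery
    {L : Type*} [Field L] [Fintype L]
    (p e N B T a δ : ℕ) (hp : p.Prime) (he : 1 ≤ e)
    (hN : 1 ≤ N) (hNB : N ≤ B) (hBT : B ≤ T)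
    (hδ1 : 1 ≤ δ) (hδB : δ ≤ B) (hT : T = a * B + δ) (hcase : B - N ≤ δ)
    (hcardL : Fintype.card L = (p ^ e) ^ 2)
    (K : Subfield L) (hcardK : Nat.card K = p ^ e)
    (α : L) (hα : α ∉ K)
    (G : Fin (T - N + 1) → ℕ → L)
    (hGK : ∀ i j, j ≤ T → G i j ∈ K)
    (hMDS : ∀ S : Finset ℕ, S ⊆ Finset.range (T + 1) → S.card = T - N + 1 →
      LinearIndependent L (fun j : S => fun i => G i (j : ℕ)))
    (i : ℕ) (hi : i ≤ B + T - N)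
    (E : Finset ℕ) (hE : E ⊆ Finset.range (B + T - N + 1)) (hEcard : E.card ≤ N) :
    RecoverableFrom (ConstructionA N B T a α G) i
      (Finset.range (min (i + T) (B + T - N) + 1) \ E) := by
  have hshift : ∀ j < B - N, ∀ l ∈ Icc 1 a, j + l * B < T := by
    intro j hj l hl
    have := Nat.mul_le_mul_right B (mem_Icc.1 hl).2
    omega
  apply recoverableFrom_of_forall_eq_zero _ _ _ (coordinateFunctional N B T a α G)
  · rintro c ⟨m, h1, h2, h3⟩
    have key : ∀ j ≤ B + T - N, c j = coordinateFunctional N B T a α G j m := by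
      intro j hj
      unfold coordinateFunctional
      split_ifs with hjT hjn
      · rw [h1 j hjT, columnFunctional_apply]
      · obtain ⟨t, rfl⟩ := Nat.exists_eq_add_of_le (not_lt.1 hjT)
        have ht : t < B - N := by omega
        rw [h3 t ht, h1 t (by omega), Nat.add_sub_cancel_left, LinearMap.add_apply,
          LinearMap.smul_apply, LinearMap.sum_apply, columnFunctional_apply, smul_eq_mul]
        congr 1
        exact Finset.sum_congr rfl fun l hl => by
          rw [h1 _ (hshift t ht l hl), columnFunctional_apply]
      · obtain rfl : j = B + T - N := by omega
        rw [h2, columnFunctional_apply]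
    refine ⟨m, key i hi, fun j hj => key j ?_⟩
    simp only [mem_sdiff, mem_range] at hj
    omega
  · intro m hm
    have hwin : ∀ j, j ≤ i + T → j ≤ B + T - N → j ∉ E →
        coordinateFunctional N B T a α G j m = 0 := by
      intro j h1 h2 h3
      apply hm
      simp only [mem_sdiff, mem_range]
      exact ⟨by omega, h3⟩
    have hall : (∀ j ≤ T, columnFunctional G j m = 0) →
        coordinateFunctional N B T a α G i m = 0 := by
      intro h
      unfold coordinateFunctional
      split_ifs with hiT hin
      · exact h i hiT.le
      · have ht : i - T < B - N := by omega
        simp only [LinearMap.add_apply, LinearMap.smul_apply, LinearMap.sum_apply]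
        rw [h _ (by omega), Finset.sum_eq_zero fun l hl => h _ (hshift _ ht l hl).le]
        simp
      · exact h T le_rfl
    have hMDS0 : ∀ A ⊆ range (T + 1), T - N + 1 ≤ A.card →
        (∀ j ∈ A, columnFunctional G j m = 0) → ∀ j ≤ T, columnFunctional G j m = 0 := by
      intro A hA hcA h j hj
      obtain ⟨S, hSA, hScard⟩ := exists_subset_card_eq hcA
      obtain ⟨κ, hκ⟩ := exists_subfield_combination K G hGK S (hSA.trans hA) hScard
        (hMDS S (hSA.trans hA) hScard) j hj
      rw [columnFunctional_combination G S (fun s => (κ s : L)) j hκ]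
      exact Finset.sum_eq_zero fun s hs => by rw [h s (hSA hs), mul_zero]
    have hX0 : ∀ j ∈ range T \ E, columnFunctional G j m = 0 := by
      intro j hj
      rw [mem_sdiff, mem_range] at hj
      have := hwin j (by omega) (by omega) hj.2
      rwa [coordinateFunctional, if_pos hj.1] at this
    have hXsub : range T \ E ⊆ range (T + 1) :=
      sdiff_subset.trans (range_subset_range.2 (Nat.le_succ T))
    have hXle : ∀ j ∈ range T \ E, j < T := fun j hj => mem_range.1 (mem_sdiff.1 hj).1
    by_cases hXcard : T - N + 1 ≤ (range T \ E).card
    · exact hall (hMDS0 _ hXsub hXcard hX0)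
    have hcount : (range T \ E).card + (range T ∩ E).card = T := by
      rw [card_sdiff_add_card_inter, card_range]
    have hinter : (range T ∩ E).card ≤ E.card := card_le_card inter_subset_right
    have hET : E ⊆ range T := by
      have : range T ∩ E = E := eq_of_subset_of_card_le inter_subset_right (by omega)
      exact this ▸ inter_subset_left
    have hlate : ∀ j, T ≤ j → j ∉ E := fun j hj hjE => by
      have := mem_range.1 (hET hjE)
      omega
    by_cases hiB : B - N ≤ i
    · -- The window reaches the last coordinate, which supplies the missing column `T`.
      have hT0 : columnFunctional G T m = 0 := by
        have := hwin (B + T - N) (by omega) le_rfl (hlate _ (by omega))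
        rwa [coordinateFunctional, if_neg (by omega), if_neg (by omega)] at this
      refine hall (hMDS0 (insert T (range T \ E)) ?_ ?_ ?_)
      · exact insert_subset (by simp) hXsub
      · rw [card_insert_of_notMem fun h => (hXle T h).false]
        omega
      · simpa only [forall_mem_insert] using ⟨hT0, hX0⟩
    · push Not at hiB
      have hiT : i < T := by omega
      rw [coordinateFunctional, if_pos hiT]
      by_cases hiE : i ∈ E
      swap
      · exact hX0 i (by simp [hiT, hiE])
      have hiX : i ∉ range T \ E := by simp [hiE]
      have hS : insert i (range T \ E) ⊆ range (T + 1) :=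
        insert_subset (mem_range.2 (by omega)) hXsub
      have hScard : (insert i (range T \ E)).card = T - N + 1 := by
        rw [card_insert_of_notMem hiX]
        omega
      have hmul : ∀ j ≤ T, ∃ κ : K, columnFunctional G j m = κ * columnFunctional G i m := by
        intro j hj
        obtain ⟨κ, hκ⟩ := exists_subfield_combination K G hGK _ hS hScard
          (hMDS _ hS hScard) j hj
        refine ⟨κ i, ?_⟩
        rw [columnFunctional_combination G _ (fun s => (κ s : L)) j hκ, sum_insert hiX,
          Finset.sum_eq_zero (fun s hs => by rw [hX0 s hs, mul_zero]), add_zero]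
      choose! κ hκ using hmul
      have hcheck := hwin (T + i) (by omega) (by omega) (hlate _ (by omega))
      rw [coordinateFunctional, if_neg (by omega), if_pos (by omega),
        Nat.add_sub_cancel_left, LinearMap.add_apply, LinearMap.smul_apply,
        LinearMap.sum_apply, smul_eq_mul,
        Finset.sum_congr rfl fun l hl => hκ _ (hshift i hiB l hl).le,
        ← Finset.sum_mul, ← add_mul] at hcheck
      refine (mul_eq_zero.1 hcheck).resolve_left fun h => hα ?_
      rw [eq_neg_of_add_eq_zero_left h]
      exact neg_mem (sum_mem fun l _ => (κ _).2)
end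

section
/- Linear field size for N = B − 1: Let B, T be integers with 2 ≤ B ≤ T and set N = B − 1. Then for every prime power q with q ≥ T + 1, there exists a linear code C over F_q of length n = T + 2 and dimension k = T − B + 2 that conforms to C(B−1, B, W) with delay T; in particular a field of size linear in T (size ≥ T+1) suffices for a rate-optimal code in this case. -/
/-!
The code is described through its dual. Fix pairwise distinct points `x 1, …, x (T+1)` of the field
(possible since `q ≥ T+1`) and a sequence `a` of scalars. The dual code consists of the words
`y` with `y 0 = s` and `y j = s * a j - f (x j)` for `j ≥ 1`, where `s` is a scalar and `f` is a
polynomial of degree `< B - 1`; it has dimension `B`, so the code has dimension `T + 2 - B`.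
A coordinate `i` is recoverable from `I` as soon as some dual word is nonzero at `i` and vanishes
outside `I ∪ {i}` (`recoverable_of_dual_word`).

* Erasure of at most `B - 1` coordinates: for `i ≥ 1` take `s = 0` and `f` interpolating the
  indicator of `i` at the erased points. For `i = 0` the coordinate `T + 1` arrives too late, but at
  most `B - 2` coordinates other than `0` are erased, so `s = 1` and `f` interpolating `a` at these
  and at `T + 1` works.
* Bursts starting at `0`: since `a` vanishes on `1, …, B - 1` and at `T + 1`, the dual word with
  `s = 1`, `f = 0` recovers coordinate `0`. Other coordinates in the burst are recovered with
  `s = 0`, because only `B - 1` nonzero indices occur.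
* Bursts within `1, …, T + 1`: they are covered by a window of `B` consecutive indices. It suffices
  that on no such window `a` agrees with a polynomial of degree `< B - 1`
  (`exists_poly_of_no_agreement`).

Such a sequence `a` exists (`exists_sequence`): let `a j = 1` for multiples `j < T` of `B`,
`a (T+1) = 0`, `a j = 0` for the other `j ≠ T`, and `a T = c`. A window inside `1, …, T - 1` contains
exactly one multiple of `B`, so an agreeing polynomial would have `B - 1` roots without being zero.
Each of the last two windows forbids one value of `c`, and the field has at least three elements.
-/

open Finset

/-!
Linear field size for `N = B - 1`: for `2 ≤ B ≤ T` and every prime power `q = p^e ≥ T+1`,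
there exists a linear code over `F_q = GaloisField p e` of length `n = T + 2` and dimension
`k = T - B + 2` conforming to `C(B-1, B, W)` with delay `T`; in particular a field of size
linear in `T` suffices for a rate-optimal code in this case.
-/

open Polynomial

/-- Polynomial interpolation at a set of at most `d` of the points, in degree `< d`. -/
lemma exists_interp {F : Type*} [Field F] {x : ℕ → F} {d : ℕ} (S : Finset ℕ)
    (hx : Set.InjOn x S) (hS : S.card ≤ d) (r : ℕ → F) :
    ∃ f ∈ degreeLT F d, ∀ j ∈ S, f.eval (x j) = r j := by
  refine ⟨Lagrange.interpolate S x r, ?_, fun j hj => Lagrange.eval_interpolate_at_node r hx hj⟩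
  rw [mem_degreeLT]
  exact (Lagrange.degree_interpolate_lt r hx).trans_le (by exact_mod_cast hS)

lemma eq_of_eval_eq {F : Type*} [Field F] {x : ℕ → F} {d : ℕ} {S : Finset ℕ}
    (hx : Set.InjOn x S) (hS : d ≤ S.card) {f g : F[X]} (hf : f ∈ degreeLT F d)
    (hg : g ∈ degreeLT F d) (h : ∀ j ∈ S, f.eval (x j) = g.eval (x j)) : f = g := by
  rw [mem_degreeLT] at hf hg
  have hS' : (d : WithBot ℕ) ≤ (S.card : WithBot ℕ) := by exact_mod_cast hS
  exact eq_of_degrees_lt_of_eval_index_eq S hx (hf.trans_le hS') (hg.trans_le hS') h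

/-- If `a` agrees with no polynomial of degree `< d` on a set of at most `d + 1` indices, then every
index of the set can be separated from the others by such a polynomial. -/
lemma exists_poly_of_no_agreement {F : Type*} [Field F] {x a : ℕ → F} {d : ℕ} {W : Finset ℕ}
    (hx : Set.InjOn x W) (hW : W.card ≤ d + 1)
    (hno : ∀ P ∈ degreeLT F d, ¬ ∀ j ∈ W, P.eval (x j) = a j) {i : ℕ} (hi : i ∈ W) :
    ∃ f ∈ degreeLT F d, (∀ j ∈ W, j ≠ i → f.eval (x j) = a j) ∧ f.eval (x i) ≠ a i := by
  obtain ⟨f, hf, hfe⟩ := exists_interp (W.erase i) (hx.mono (by simp))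
    (d := d) (by rw [card_erase_of_mem hi]; omega) a
  refine ⟨f, hf, fun j hj hji => hfe j (by simp [hj, hji]), fun h => hno f hf fun j hj => ?_⟩
  by_cases hji : j = i
  · rw [hji, h]
  · exact hfe j (by simp [hj, hji])

/-- A sequence vanishing on `1, …, B - 1` and at `T + 1` which agrees on no window of `B`
consecutive indices in `1, …, T + 1` with a polynomial of degree `< B - 1`. -/
lemma exists_sequence {F : Type*} [Field F] {B T : ℕ} (hB : 2 ≤ B) (hBT : B ≤ T) {x : ℕ → F}
    (hx : Set.InjOn x (Set.Icc 1 (T + 1))) (h3 : ∀ b b' : F, ∃ c, c ≠ b ∧ c ≠ b') :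
    ∃ a : ℕ → F, (∀ j, 1 ≤ j → j < B → a j = 0) ∧ a (T + 1) = 0 ∧
      ∀ u, 1 ≤ u → u + B - 1 ≤ T + 1 → ∀ P ∈ degreeLT F (B - 1),
        ¬ ∀ j ∈ Finset.Icc u (u + B - 1), P.eval (x j) = a j := by
  set a₀ : ℕ → F := fun j => if B ∣ j ∧ j < T then 1 else 0 with ha₀
  have hx' : ∀ S : Finset ℕ, (∀ j ∈ S, 1 ≤ j ∧ j ≤ T + 1) → Set.InjOn x S := fun S hS =>
    hx.mono fun j hj => hS j hj
  have hQx : Set.InjOn x (Finset.Icc (T - B + 1) (T - 1)) :=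
    hx' _ fun j hj => by rw [Finset.mem_Icc] at hj; omega
  have hRx : Set.InjOn x ((Finset.Icc (T - B + 2) (T + 1)).erase T) :=
    by exact_mod_cast hx' _ fun j hj => by rw [Finset.mem_erase, Finset.mem_Icc] at hj; omega
  -- `Q` and `R` are the only candidates for agreement on the windows ending at `T` and `T + 1`.
  obtain ⟨Q, hQ, hQe⟩ := exists_interp (d := B - 1) _ hQx
    (by rw [Nat.card_Icc]; omega) a₀
  obtain ⟨R, hR, hRe⟩ := exists_interp (d := B - 1) _ hRx
    (by rw [card_erase_of_mem (by rw [Finset.mem_Icc]; omega), Nat.card_Icc]; omega) a₀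
  obtain ⟨c, hcQ, hcR⟩ := h3 (Q.eval (x T)) (R.eval (x T))
  have hne : ∀ j, j ≠ T → Function.update a₀ T c j = a₀ j := fun j hj =>
    Function.update_of_ne hj _ _
  refine ⟨Function.update a₀ T c, fun j h1 hj => ?_, ?_, fun u hu hu' P hP hag => ?_⟩
  · rw [hne j (by omega), ha₀]
    have : ¬ B ∣ j := Nat.not_dvd_of_pos_of_lt h1 hj
    simp [this]
  · rw [hne _ (by omega), ha₀]
    simp
  · by_cases h1 : u + B - 1 = T
    · have : P = Q := by
        refine eq_of_eval_eq hQx (by rw [Nat.card_Icc]; omega) hP hQ fun j hj => ?_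
        rw [Finset.mem_Icc] at hj
        rw [hag j (by rw [Finset.mem_Icc]; omega), hne j (by omega),
          hQe j (by rw [Finset.mem_Icc]; omega)]
      have h := hag T (by rw [Finset.mem_Icc]; omega)
      rw [Function.update_self, this] at h
      exact hcQ h.symm
    by_cases h2 : u + B - 1 = T + 1
    · have : P = R := by
        refine eq_of_eval_eq hRx (by
          rw [card_erase_of_mem (by rw [Finset.mem_Icc]; omega), Nat.card_Icc]; omega)
          hP hR fun j hj => ?_
        rw [hRe j hj]
        rw [Finset.mem_erase, Finset.mem_Icc] at hj
        rw [hag j (by rw [Finset.mem_Icc]; omega), hne j (by omega)]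
      have h := hag T (by rw [Finset.mem_Icc]; omega)
      rw [Function.update_self, this] at h
      exact hcR h.symm
    -- `w` is the unique multiple of `B` in the window.
    obtain ⟨w, hw, hwu, hwB⟩ : ∃ w, B ∣ w ∧ u ≤ w ∧ w ≤ u + B - 1 := by
      refine ⟨B * ((u + B - 1) / B), dvd_mul_right _ _, ?_, Nat.mul_div_le _ _⟩
      have := Nat.lt_mul_div_succ (u + B - 1) (show 0 < B by omega)
      rw [mul_add] at this
      omega
    have hwm : w ∈ Finset.Icc u (u + B - 1) := by rw [Finset.mem_Icc]; omega
    have hPe : P = 0 := by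
      refine eq_of_eval_eq (S := (Finset.Icc u (u + B - 1)).erase w)
        (hx' _ fun j hj => by rw [Finset.mem_erase, Finset.mem_Icc] at hj; omega)
        (by rw [card_erase_of_mem hwm, Nat.card_Icc]; omega) hP (zero_mem _) fun j hj => ?_
      rw [Finset.mem_erase] at hj
      rw [hag j hj.2]
      rw [Finset.mem_Icc] at hj
      have hnd : ¬ B ∣ j := by
        intro hjd
        rcases Nat.lt_or_gt_of_ne hj.1 with h | h
        · have := Nat.le_of_dvd (by omega) (Nat.dvd_sub hw hjd)
          omega
        · have := Nat.le_of_dvd (by omega) (Nat.dvd_sub hjd hw)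
          omega
      rw [hne j (by omega), ha₀]
      simp [hnd]
    have h := hag w hwm
    rw [hne w (by omega), hPe, ha₀] at h
    simp [hw, show w < T by omega] at h

/-- The parametrization `(s, f) ↦ (s, s a₁ - f(x₁), …, s a_{n-1} - f(x_{n-1}))` of the dual code,
with `f` ranging over the polynomials of degree `< d`. -/
noncomputable def dualWord {F : Type*} [Field F] (x a : ℕ → F) (d n : ℕ) :
    (F × degreeLT F d) →ₗ[F] (Fin n → F) where
  toFun z j := if j.val = 0 then z.1 else z.1 * a j - (z.2 : F[X]).eval (x j)
  map_add' z w := by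
    ext j
    by_cases hj : j.val = 0
    · simp [hj]
    · simp [hj]; ring
  map_smul' t z := by
    ext j
    by_cases hj : j.val = 0
    · simp [hj]
    · simp [hj]; ring

lemma dualWord_of_eq_zero {F : Type*} [Field F] {x a : ℕ → F} {d n : ℕ} {j : Fin n}
    (hj : j.val = 0) (z : F × degreeLT F d) : dualWord x a d n z j = z.1 :=
  if_pos hj

lemma dualWord_of_ne_zero {F : Type*} [Field F] {x a : ℕ → F} {d n : ℕ} {j : Fin n}
    (hj : j.val ≠ 0) (z : F × degreeLT F d) :
    dualWord x a d n z j = z.1 * a j - (z.2 : F[X]).eval (x j) :=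
  if_neg hj

/-- The code whose dual is the range of `dualWord`, i.e. the words orthogonal to it under the dot
product. -/
noncomputable def burstCode {F : Type*} [Field F] (x a : ℕ → F) (d n : ℕ) :
    Submodule F (Fin n → F) :=
  ((LinearMap.range (dualWord x a d n)).map
    (dotProductEquiv F (Fin n)).toLinearMap).dualCoannihilator

lemma dualWord_injective {F : Type*} [Field F] {x : ℕ → F} (a : ℕ → F) {d T : ℕ} (hd : d ≤ T + 1)
    (hx : Set.InjOn x (Set.Icc 1 (T + 1))) :
    Function.Injective (dualWord x a d (T + 2)) := by
  rw [← LinearMap.ker_eq_bot, LinearMap.ker_eq_bot']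
  rintro ⟨s, f, hf⟩ h
  have hs : s = 0 := by simpa [dualWord] using congrFun h 0
  have hf0 : f = 0 := by
    refine eq_of_eval_eq (S := Finset.Icc 1 (T + 1)) (by simpa using hx)
      (by rw [Nat.card_Icc]; omega) hf (zero_mem _) fun j hj => ?_
    rw [Finset.mem_Icc] at hj
    have := congrFun h ⟨j, by omega⟩
    simpa [dualWord, show j ≠ 0 by omega, hs] using this
  simp [hs, hf0]

lemma finrank_burstCode {F : Type*} [Field F] {x : ℕ → F} (a : ℕ → F) {d T : ℕ} (hd : d ≤ T + 1)
    (hx : Set.InjOn x (Set.Icc 1 (T + 1))) :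
    Module.finrank F (burstCode x a d (T + 2)) = T + 1 - d := by
  have h := Subspace.finrank_add_finrank_dualCoannihilator_eq
    ((LinearMap.range (dualWord x a d (T + 2))).map (dotProductEquiv F (Fin (T + 2))).toLinearMap)
  rw [LinearEquiv.finrank_map_eq,
    LinearMap.finrank_range_of_inj (dualWord_injective a hd hx), Module.finrank_prod,
    Module.finrank_self, (degreeLTEquiv F d).finrank_eq, Module.finrank_fin_fun,
    Module.finrank_fin_fun] at h
  unfold burstCode
  omega

/-- A dual word that is nonzero at `i` and vanishes outside `I ∪ {i}` yields a recovery rule. -/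
lemma recoverable_of_dual_word {F : Type*} [Field F] {x a : ℕ → F} {d n : ℕ} {i : Fin n}
    {I : Finset (Fin n)} (s : F) {f : F[X]} (hf : f ∈ degreeLT F d)
    (hi : dualWord x a d n (s, ⟨f, hf⟩) i ≠ 0)
    (h0 : ∀ j, j ∉ I → j ≠ i → dualWord x a d n (s, ⟨f, hf⟩) j = 0) :
    Recoverable (burstCode x a d n) i I := by
  by_cases hiI : i ∈ I
  · exact ⟨Pi.single i 1, fun c _ => by simp [Pi.single_apply, hiI]⟩
  set y := dualWord x a d n (s, ⟨f, hf⟩) with hy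
  refine ⟨fun j => -(y j / y i), fun c hc => ?_⟩
  have hdot : ∑ j, y j * c j = 0 := by
    rw [burstCode, Submodule.mem_dualCoannihilator] at hc
    exact hc _ (Submodule.mem_map_of_mem (LinearMap.mem_range_self _ (s, ⟨f, hf⟩)))
  have hsum : ∑ j, y j * c j = ∑ j ∈ insert i I, y j * c j := by
    refine (Finset.sum_subset (Finset.subset_univ _) fun j _ hj => ?_).symm
    rw [Finset.mem_insert, not_or] at hj
    rw [h0 j hj.2 hj.1, zero_mul]
  rw [hsum, Finset.sum_insert hiI] at hdot
  apply mul_left_cancel₀ hi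
  rw [eq_neg_of_add_eq_zero_left hdot, Finset.mul_sum, ← Finset.sum_neg_distrib]
  refine Finset.sum_congr rfl fun j _ => ?_
  field_simp

/-- A nonzero index `i` is recoverable from `I` if at most `d` nonzero indices, collected in `S`,
are missing. -/
lemma recoverable_of_few {F : Type*} [Field F] {x a : ℕ → F} {d n : ℕ} {i : Fin n}
    {I : Finset (Fin n)} (hi : i.val ≠ 0) {S : Finset ℕ} (hx : Set.InjOn x S) (hS : S.card ≤ d)
    (hiS : i.val ∈ S) (hI : ∀ j, j ∉ I → j.val ≠ 0 → j.val ∈ S) :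
    Recoverable (burstCode x a d n) i I := by
  obtain ⟨f, hf, hfe⟩ := exists_interp S hx hS (Pi.single i.val 1)
  refine recoverable_of_dual_word 0 hf ?_ fun j hj hji => ?_
  · simp [dualWord_of_ne_zero hi, hfe _ hiS]
  · by_cases hj0 : j.val = 0
    · simp [dualWord_of_eq_zero hj0]
    · have : j.val ≠ i.val := fun h => hji (Fin.ext h)
      simp [dualWord_of_ne_zero hj0, hfe _ (hI j hj hj0), this]

lemma recoverable_of_mem {F : Type*} [Field F] {n : ℕ} (C : Submodule F (Fin n → F)) {i : Fin n}
    {I : Finset (Fin n)} (hi : i ∈ I) : Recoverable C i I :=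
  ⟨Pi.single i 1, fun c _ => by simp [Pi.single_apply, hi]⟩

lemma conforms_burstCode {F : Type*} [Field F] {B T : ℕ} (hB : 2 ≤ B) (hBT : B ≤ T) {x a : ℕ → F}
    (hx : Set.InjOn x (Set.Icc 1 (T + 1))) (ha0 : ∀ j, 1 ≤ j → j < B → a j = 0)
    (haT : a (T + 1) = 0)
    (hno : ∀ u, 1 ≤ u → u + B - 1 ≤ T + 1 → ∀ P ∈ degreeLT F (B - 1),
        ¬ ∀ j ∈ Finset.Icc u (u + B - 1), P.eval (x j) = a j) :
    Conforms (burstCode x a (B - 1) (T + 2)) (B - 1) B T := by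
  have hx' : ∀ S : Finset ℕ, (∀ j ∈ S, 1 ≤ j ∧ j ≤ T + 1) → Set.InjOn x S := fun S hS =>
    hx.mono fun j hj => hS j hj
  intro i
  have hiT := i.isLt
  refine ⟨fun E hE => ?_, fun u v huv hv hB' => ?_⟩
  · by_cases hiE : i ∈ E
    swap
    · exact recoverable_of_mem _ (by simp [hiE]; omega)
    have hEcard : (E.image Fin.val).card ≤ B - 1 := card_image_le.trans hE
    have hmem : ∀ j ∈ E, j.val ∈ E.image Fin.val := fun j hj => mem_image_of_mem _ hj
    have hlt : ∀ j ∈ E.image Fin.val, j < T + 2 := by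
      intro j hj
      obtain ⟨k, -, rfl⟩ := mem_image.1 hj
      exact k.isLt
    by_cases hi0 : i.val = 0
    · -- Here coordinate `T + 1` is not yet available, so it joins the erased indices.
      set S := insert (T + 1) ((E.image Fin.val).erase 0) with hS
      have hScard : S.card ≤ B - 1 := by
        have h1 := card_insert_le (T + 1) ((E.image Fin.val).erase 0)
        have h2 := card_erase_add_one (hi0 ▸ hmem i hiE)
        rw [← hS] at h1
        omega
      obtain ⟨f, hf, hfe⟩ := exists_interp S (hx' S fun j hj => by
        rw [hS, mem_insert, mem_erase] at hj
        rcases hj with rfl | ⟨h0, hj⟩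
        · omega
        · have := hlt j hj; omega) hScard a
      refine recoverable_of_dual_word 1 hf (by simp [dualWord_of_eq_zero hi0]) fun j hj hji => ?_
      have hj0 : j.val ≠ 0 := fun h => hji (Fin.ext (by omega))
      have hjS : j.val ∈ S := by
        rw [hS, mem_insert, mem_erase]
        by_cases hjE : j ∈ E
        · exact Or.inr ⟨hj0, hmem j hjE⟩
        · left
          have hjT := j.isLt
          simp [hjE] at hj
          omega
      simp [dualWord_of_ne_zero hj0, hfe _ hjS]
    · refine recoverable_of_few hi0 (S := (E.image Fin.val).erase 0) (hx' _ fun j hj => ?_)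
        ((card_le_card (erase_subset _ _)).trans hEcard)
        (by rw [mem_erase]; exact ⟨hi0, hmem i hiE⟩) fun j hj hj0 => ?_
      · rw [mem_erase] at hj
        have := hlt j hj.2
        omega
      · rw [mem_erase]
        refine ⟨hj0, hmem j ?_⟩
        by_contra hjE
        have hjT := j.isLt
        simp [hjE] at hj
        omega
  · by_cases hiW : u ≤ i.val ∧ i.val ≤ v
    swap
    · exact recoverable_of_mem _ (by
        rw [Finset.mem_filter]
        exact ⟨Finset.mem_univ _, by omega, hiW⟩)
    have hout : ∀ j : Fin (T + 2), j ∉ (Finset.univ.filter fun j : Fin (T + 2) =>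
        j.val ≤ min (i.val + T) (T + 2 - 1) ∧ ¬(u ≤ j.val ∧ j.val ≤ v)) →
        (u ≤ j.val ∧ j.val ≤ v) ∨ (i.val = 0 ∧ j.val = T + 1) := by
      intro j hj
      have hjT := j.isLt
      rw [Finset.mem_filter] at hj
      by_contra hcon
      exact hj ⟨Finset.mem_univ _, by omega, by omega⟩
    by_cases hi0 : i.val = 0
    · refine recoverable_of_dual_word 1 (zero_mem _) (by simp [dualWord_of_eq_zero hi0])
        fun j hj hji => ?_
      have hj0 : j.val ≠ 0 := fun h => hji (Fin.ext (by omega))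
      have haj : a j.val = 0 := by
        rcases hout j hj with h | h
        · exact ha0 _ (by omega) (by omega)
        · rw [h.2, haT]
      simp [dualWord_of_ne_zero hj0, haj]
    by_cases hu0 : u = 0
    · refine recoverable_of_few hi0 (S := Finset.Icc 1 v)
        (hx' _ fun j hj => by rw [Finset.mem_Icc] at hj; omega)
        (by rw [Nat.card_Icc]; omega) (by rw [Finset.mem_Icc]; omega) fun j hj hj0 => ?_
      have := hout j hj
      rw [Finset.mem_Icc]
      omega
    -- The burst lies in the window of `B` indices starting at `min u (T + 2 - B)`.
    obtain ⟨w, hw1, hwT, hwu, hwv⟩ : ∃ w, 1 ≤ w ∧ w + B - 1 ≤ T + 1 ∧ w ≤ u ∧ v ≤ w + B - 1 :=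
      ⟨min u (T + 2 - B), by omega, by omega, by omega, by omega⟩
    obtain ⟨f, hf, hfe, hfi⟩ := exists_poly_of_no_agreement (d := B - 1)
      (W := Finset.Icc w (w + B - 1)) (i := i.val)
      (hx' _ fun j hj => by rw [Finset.mem_Icc] at hj; omega)
      (by rw [Nat.card_Icc]; omega) (hno w hw1 hwT) (by rw [Finset.mem_Icc]; omega)
    refine recoverable_of_dual_word 1 hf ?_ fun j hj hji => ?_
    · simpa [dualWord_of_ne_zero hi0, sub_eq_zero] using hfi.symm
    · have := hout j hj
      have hj0 : j.val ≠ 0 := by omega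
      simp [dualWord_of_ne_zero hj0, hfe j.val (by rw [Finset.mem_Icc]; omega)
        (fun h => hji (Fin.ext h))]

theorem constructionA_linear_field_size
    (B T : ℕ) (hB : 2 ≤ B) (hBT : B ≤ T)
    (p e : ℕ) [Fact p.Prime] (he : 1 ≤ e) (hq : T + 1 ≤ p ^ e) :
    ∃ C : Submodule (GaloisField p e) (Fin (T + 2) → GaloisField p e),
      Module.finrank (GaloisField p e) C = T - B + 2 ∧ Conforms C (B - 1) B T := by
  have : Fintype (GaloisField p e) := Fintype.ofFinite _
  have hcard : Fintype.card (GaloisField p e) = p ^ e := by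
    rw [← Nat.card_eq_fintype_card, GaloisField.card p e (by omega)]
  obtain ⟨φ⟩ : Nonempty (Fin (T + 1) ↪ GaloisField p e) :=
    Function.Embedding.nonempty_of_card_le (by rw [Fintype.card_fin, hcard]; exact hq)
  set x : ℕ → GaloisField p e := fun j => φ (Fin.ofNat (T + 1) (j - 1)) with hxdef
  have hx : Set.InjOn x (Set.Icc 1 (T + 1)) := by
    intro j hj k hk h
    rw [Set.mem_Icc] at hj hk
    have h' := congrArg Fin.val (φ.injective h)
    simp only [Fin.ofNat] at h'
    rw [Nat.mod_eq_of_lt (by omega), Nat.mod_eq_of_lt (by omega)] at h'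
    omega
  have h3 : ∀ b b' : GaloisField p e, ∃ c, c ≠ b ∧ c ≠ b' := by
    classical
    intro b b'
    obtain ⟨c, hc⟩ := Finset.exists_mem_notMem_of_card_lt_card
      (s := {b, b'}) (t := (Finset.univ : Finset (GaloisField p e))) (by
        have := Finset.card_le_two (a := b) (b := b')
        rw [Finset.card_univ, hcard]
        omega)
    exact ⟨c, by simpa using hc.2⟩
  obtain ⟨a, ha0, haT, hno⟩ := exists_sequence hB hBT hx h3
  refine ⟨burstCode x a (B - 1) (T + 2), ?_, conforms_burstCode hB hBT hx ha0 haT hno⟩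
  rw [finrank_burstCode a (by omega) hx]
  omega
end

section
/- Proposition 2 (Construction B, existence form): Let N, B, T be integers with 1 ≤ N ≤ B ≤ T. Then for every prime power q with q ≥ max(2, B−N), there exists a linear code C over the field F_{q^{T+1}} of length n = B + T − N + 1 and dimension k = T − N + 1 that conforms to C(N,B,W) with delay T. In particular, for all feasible parameters N, B, T there exists a rate-optimal linear block code with delay constraint T, of rate (T−N+1)/(B+T−N+1). -/
/-!
Write `δ = B - N`, so `n = T + δ + 1`. The code is (a subcode of) the kernel of a parity-check
matrix with `δ` rows over the prime field `𝔽_p` stacked on `N` rows of Moore (Gabidulin) type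
`(β_j ^ (p ^ s))_j`, `s < N`, over the large field `K`. Taking the kernel and then a subspace of the
required dimension avoids having to prove that the rows are independent.

*Rows over `𝔽_p`.* Row `i < δ` has a `1` in column `i`, vanishes in every other column outside
`[i + B, i + T]`, and is nonzero in column `i + T` (`exists_burst_rows`). Thus for `i < δ` it
recovers coordinate `i` from any burst of length `B`, in time. From column `B` on, the rows form a
`Staircase` matrix: a banded matrix all of whose square windows of consecutive columns are
invertible. Such matrices exist over every field and for all parameters by a Euclidean algorithm
(`exists_staircase`): prepend an identity block (`Staircase.prepend`), or pass to the dual code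
(`Staircase.exists_dual`).

*Moore rows.* If a vector `x` over `K` has all its `𝔽_p`-slices in an `𝔽_p`-space `V` with
`dim V ≤ N`, and `β`, seen as an `𝔽_p`-linear map `φ : 𝔽_p^n → K`, is injective on `V`, then the `N`
Moore equations force `x = 0` (`eq_zero_of_moore`, from invertibility of the Moore matrix,
`moore_injective`). So decoding reduces to bounding dimensions over `𝔽_p` and to
injectivity of `φ`. The map `φ` is chosen to vanish on the coordinates strictly between `T` and
`n - 1`, and to be injective on the vectors supported on `[0, T] ∪ {n - 1}` that satisfy row `0`.
This is a space of dimension at most `T + 1 ≤ [K : 𝔽_p]`. Because row `i` ends exactly in column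
`i + T`, injectivity propagates to all the spaces met in the decoding (`exists_code`).

The Staircase matrices need no lower bound on the field size, which is why the prime field
suffices in place of `𝔽_q`.
-/

open Finset

/-!
Proposition 2 (Construction B, existence form): for all feasible `1 ≤ N ≤ B ≤ T` and every
prime power `q = p^e ≥ max 2 (B - N)`, there exists a linear code over
`F_{q^{T+1}} = GaloisField p (e * (T+1))` of length `n = B + T - N + 1` and dimension
`k = T - N + 1` conforming to `C(N,B,W)` with delay `T`; in particular a rate-optimal
linear block code of rate `(T-N+1)/(B+T-N+1)` exists for all feasible parameters.
-/

/-! ### Banded matrices with invertible windows -/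

section

/-- `P` restricted to rows `i < r` and columns `j < r + s` is a banded matrix: row `i` is supported
on `[i, i + s]` and is nonzero at both ends of that interval; moreover any `r` consecutive columns
are independent, expressed as triviality of the left kernel of each window. Indices are natural
numbers; entries of `P` in rows `i ≥ r` are irrelevant. -/
structure Staircase {k : Type*} [Field k] (P : ℕ → ℕ → k) (r s : ℕ) : Prop where
  left_ne : ∀ i < r, P i i ≠ 0
  right_ne : ∀ i < r, P i (i + s) ≠ 0
  left_zero : ∀ i < r, ∀ j < i, P i j = 0
  right_zero : ∀ i < r, ∀ j, i + s < j → P i j = 0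
  window : ∀ u ≤ s, ∀ f : ℕ → k,
    (∀ j, u ≤ j → j < u + r → ∑ i ∈ range r, f i * P i j = 0) → ∀ i < r, f i = 0

theorem sum_range_eq_window {M : Type*} [AddCommMonoid M] (g : ℕ → M) {m u r : ℕ}
    (hm : u + r ≤ m) (hg : ∀ j, j < u ∨ u + r ≤ j → g j = 0) :
    ∑ j ∈ range m, g j = ∑ t ∈ range r, g (u + t) := by
  have h := Finset.sum_Ico_eq_sum_range g u (u + r)
  rw [Nat.add_sub_cancel_left] at h
  rw [← h]
  symm
  apply Finset.sum_subset
  · intro x hx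
    simp only [mem_Ico, mem_range] at *
    omega
  · intro x _ hx
    apply hg
    simp only [mem_Ico] at hx
    omega

variable {k : Type*} [Field k]

/-- The window condition in terms of right kernels: a vector supported on `r` consecutive columns
and annihilated by all rows vanishes. -/
theorem Staircase.window_right {P : ℕ → ℕ → k} {r s : ℕ} (hP : Staircase P r s) {m u : ℕ}
    (hu : u ≤ s) (hm : u + r ≤ m) (y : ℕ → k)
    (hy : ∀ j, j < u ∨ u + r ≤ j → y j = 0)
    (h : ∀ i < r, ∑ j ∈ range m, P i j * y j = 0) : ∀ j, y j = 0 := by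
  let M : Matrix (Fin r) (Fin r) k := fun i t => P i (u + t)
  have hMy : M.mulVec (fun t => y (u + t)) = 0 := by
    ext i
    have h1 := h i i.2
    rw [sum_range_eq_window _ hm (fun j hj => by rw [hy j hj, mul_zero])] at h1
    rw [← Fin.sum_univ_eq_sum_range (fun t => P i (u + t) * y (u + t))] at h1
    exact h1
  have hy0 : (fun t : Fin r => y (u + t)) = 0 := by
    by_contra hne
    obtain ⟨f, hf0, hf⟩ := Matrix.exists_vecMul_eq_zero_iff.2
      (Matrix.exists_mulVec_eq_zero_iff.1 ⟨_, hne, hMy⟩)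
    apply hf0
    have := hP.window u hu (fun i => if h : i < r then f ⟨i, h⟩ else 0) (by
      intro j hj1 hj2
      have h2 := congrFun hf ⟨j - u, by omega⟩
      rw [← Fin.sum_univ_eq_sum_range
        (fun i => (if h : i < r then f ⟨i, h⟩ else 0) * P i j)]
      simp only [Fin.is_lt, dite_true, Fin.eta]
      simp only [Matrix.vecMul, dotProduct, M, Pi.zero_apply] at h2
      rwa [Nat.add_sub_cancel' hj1] at h2)
    ext i
    simpa using this i i.2
  intro j
  by_cases hj : j < u ∨ u + r ≤ j
  · exact hy j hj
  · have := congrFun hy0 ⟨j - u, by omega⟩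
    simp only [Pi.zero_apply] at this
    rwa [Nat.add_sub_cancel' (by omega)] at this

/-- Prepending an identity block keeps the staircase shape; a window straddling the two blocks is
invertible because the leading columns of `P` are triangular. -/
theorem Staircase.prepend {P : ℕ → ℕ → k} {r s : ℕ} (hP : Staircase P r s) :
    Staircase (fun i j => if j < r then (if j = i then 1 else 0) else P i (j - r)) r (s + r) where
  left_ne i hi := by simp [hi]
  right_ne i hi := by
    have : i + (s + r) - r = i + s := by omega
    simpa [this, show ¬ (i + (s + r) < r) by omega] using hP.right_ne i hi
  left_zero i hi j hj := by simp [show j < r by omega, hj.ne]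
  right_zero i hi j hj := by
    simpa [show ¬ j < r by omega] using hP.right_zero i hi (j - r) (by omega)
  window u hu f hf := by
    by_cases hur : u < r
    · have h1 : ∀ i < r, u ≤ i → f i = 0 := by
        intro i hi hui
        have := hf i hui (by omega)
        simp only [hi, if_true] at this
        simpa [hi] using this
      have h2 : ∀ i < u, f i = 0 := by
        intro i
        induction i using Nat.strong_induction_on with
        | _ i ih =>
          intro hi
          have := hf (i + r) (by omega) (by omega)
          simp only [show ¬ (i + r < r) by omega, if_false, Nat.add_sub_cancel] at this
          rw [Finset.sum_eq_single i] at this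
          · exact (mul_eq_zero.1 this).resolve_right (hP.left_ne i (by omega))
          · intro b hb hbi
            rw [mem_range] at hb
            rcases lt_or_gt_of_ne hbi with h | h
            · rw [ih b h (by omega), zero_mul]
            · rw [hP.left_zero b hb i h, mul_zero]
          · intro h
            simp only [mem_range] at h
            omega
      intro i hi
      by_cases h : u ≤ i
      · exact h1 i hi h
      · exact h2 i (by omega)
    · apply hP.window (u - r) (by omega)
      intro j hj1 hj2
      have := hf (j + r) (by omega) (by omega)
      simpa only [show ¬ (j + r < r) by omega, if_false, Nat.add_sub_cancel] using this

/-- Duality: the code with generator matrix `P` has a dual code with a staircase generator matrix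
`Q`. Row `l` of `Q` is a relation among the `r + 1` columns `l, …, l + r` of `P`; it is nonzero at
both ends since `r` consecutive columns of `P` are independent. If a combination `y` of the rows
of `Q` vanishes on a window, then `y` lives on the cyclic complement of that window, where the
columns of `P` form two triangular blocks, so `y = 0`. -/
theorem Staircase.exists_dual {P : ℕ → ℕ → k} {r s : ℕ} (hP : Staircase P r s) :
    ∃ Q : ℕ → ℕ → k, Staircase Q s r := by
  have key : ∀ l : ℕ, ∃ q : ℕ → k, l < s → (q ≠ 0 ∧ (∀ j, j < l ∨ l + r < j → q j = 0) ∧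
      ∀ i < r, ∑ j ∈ range (r + s), P i j * q j = 0) := by
    intro l
    by_cases hl : l < s
    swap
    · exact ⟨0, fun h => absurd h hl⟩
    let f : (Fin (r + 1) → k) →ₗ[k] (Fin r → k) :=
      Matrix.mulVecLin (fun i t => P i (l + t) : Matrix (Fin r) (Fin (r + 1)) k)
    have hker := f.ker_ne_bot_of_finrank_lt (by simp)
    obtain ⟨y, hy, hy0⟩ := Submodule.exists_mem_ne_zero_of_ne_bot hker
    refine ⟨fun j => if h : l ≤ j ∧ j - l < r + 1 then y ⟨j - l, h.2⟩ else 0, fun _ => ⟨?_, ?_, ?_⟩⟩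
    · intro h
      apply hy0
      ext t
      have := congrFun h (l + t)
      simpa [Nat.lt_succ_iff.1 t.2] using this
    · intro j hj
      exact dif_neg (by omega)
    · intro i hi
      rw [sum_range_eq_window (u := l) (r := r + 1) _ (by omega)
        (fun j hj => mul_eq_zero_of_right _ (dif_neg (by omega)))]
      rw [← Fin.sum_univ_eq_sum_range (fun t => P i (l + t) *
        (if h : l ≤ l + t ∧ l + t - l < r + 1 then y ⟨l + t - l, h.2⟩ else 0))]
      have : ∑ t : Fin (r + 1), P i (l + t) * y t = 0 :=
        congrFun (LinearMap.mem_ker.1 hy) ⟨i, hi⟩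
      rw [← this]
      refine Finset.sum_congr rfl fun t _ => ?_
      simp [Nat.lt_succ_iff.1 t.2]
  choose Q hQ using key
  have hleft : ∀ i < s, Q i i ≠ 0 := fun i hi h0 => by
    obtain ⟨h1, h2, h3⟩ := hQ i hi
    apply h1
    funext j
    refine hP.window_right (u := i + 1) (m := r + s) (by omega) (by omega) _ ?_ h3 j
    intro j hj
    by_cases hji : j = i
    · rw [hji, h0]
    · exact h2 j (by omega)
  refine ⟨Q, hleft, ?_, fun i hi j hj => (hQ i hi).2.1 j (Or.inl hj),
    fun i hi j hj => (hQ i hi).2.1 j (Or.inr hj), ?_⟩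
  · intro i hi h0
    obtain ⟨h1, h2, h3⟩ := hQ i hi
    apply h1
    funext j
    refine hP.window_right (u := i) (m := r + s) (by omega) (by omega) _ ?_ h3 j
    intro j hj
    by_cases hji : j = i + r
    · rw [hji, h0]
    · exact h2 j (by omega)
  · intro u hu f hf
    set y : ℕ → k := fun j => ∑ l ∈ range s, f l * Q l j with hy
    have hfy : ∀ j, u ≤ j → j < u + s → y j = 0 := hf
    have hPy : ∀ i < r, ∑ j ∈ range (r + s), P i j * y j = 0 := by
      intro i hi
      simp only [hy, Finset.mul_sum]
      rw [Finset.sum_comm]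
      apply Finset.sum_eq_zero
      intro l hl
      have := (hQ l (mem_range.1 hl)).2.2 i hi
      calc _ = f l * ∑ j ∈ range (r + s), P i j * Q l j := by
            rw [Finset.mul_sum]; exact Finset.sum_congr rfl fun _ _ => by ring
        _ = 0 := by rw [this, mul_zero]
    have hhigh : ∀ i < r, u ≤ i → y (i + s) = 0 := by
      intro i
      induction i using Nat.strong_induction_on with
      | _ i ih =>
        intro hi hui
        have := hPy i hi
        rw [Finset.sum_eq_single (i + s)] at this
        · exact (mul_eq_zero.1 this).resolve_left (hP.right_ne i hi)
        · intro j hj hne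
          by_cases h1 : j < i
          · rw [hP.left_zero i hi j h1, zero_mul]
          by_cases h2 : i + s < j
          · rw [hP.right_zero i hi j h2, zero_mul]
          by_cases h3 : j < u + s
          · rw [hfy j (by omega) h3, mul_zero]
          · have := ih (j - s) (by omega) (by omega) (by omega)
            rw [Nat.sub_add_cancel (by omega)] at this
            rw [this, mul_zero]
        · intro h
          simp only [mem_range] at h
          omega
    have hlow : ∀ d i, i + d + 1 = u → y i = 0 := by
      intro d
      induction d using Nat.strong_induction_on with
      | _ d ih =>
        intro i hid
        have := hPy i (by omega)
        rw [Finset.sum_eq_single i] at this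
        · exact (mul_eq_zero.1 this).resolve_left (hP.left_ne i (by omega))
        · intro j hj hne
          by_cases h1 : j < i
          · rw [hP.left_zero i (by omega) j h1, zero_mul]
          by_cases h2 : i + s < j
          · rw [hP.right_zero i (by omega) j h2, zero_mul]
          by_cases h3 : u ≤ j
          · rw [hfy j (by omega) (by omega), mul_zero]
          · rw [ih (u - j - 1) (by omega) j (by omega), mul_zero]
        · intro h
          simp only [mem_range] at h
          omega
    have hy0 : ∀ j < s, y j = 0 := by
      intro j hj
      by_cases h1 : j < u
      · exact hlow (u - j - 1) j (by omega)
      · exact hf j (by omega) (by omega)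
    intro i
    induction i using Nat.strong_induction_on with
    | _ i ih =>
      intro hi
      have := hy0 i hi
      rw [hy] at this
      simp only at this
      rw [Finset.sum_eq_single i] at this
      · exact (mul_eq_zero.1 this).resolve_right (hleft i hi)
      · intro b hb hbi
        rw [mem_range] at hb
        rcases lt_or_gt_of_ne hbi with h | h
        · rw [ih b h (by omega), zero_mul]
        · rw [(hQ b hb).2.1 i (Or.inl h), mul_zero]
      · intro h
        simp only [mem_range] at h
        omega

/-- Euclid's algorithm on `(r, s)`: reduce `s` modulo `r` by `Staircase.prepend`, and swap `r` and `s`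
by duality. -/
theorem exists_staircase (k : Type*) [Field k] (r s : ℕ) : ∃ P : ℕ → ℕ → k, Staircase P r s := by
  -- the weight 2 makes both the reduction of `s` and the swap decrease
  induction hm : 2 * r + s using Nat.strong_induction_on generalizing r s with
  | _ m ih =>
    rcases Nat.eq_zero_or_pos r with rfl | hr
    · exact ⟨0, by simp, by simp, by simp, by simp, by simp⟩
    by_cases hrs : r ≤ s
    · obtain ⟨P, hP⟩ := ih (2 * r + (s - r)) (by omega) r (s - r) rfl
      have := hP.prepend
      rw [Nat.sub_add_cancel hrs] at this
      exact ⟨_, this⟩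
    · obtain ⟨P, hP⟩ := ih (2 * s + r) (by omega) s r rfl
      exact hP.exists_dual

end

/-! ### Linear algebra -/

/-- A linear form vanishing on the common kernel of finitely many forms is a combination of
them, so recoverability may be checked on codewords that vanish on `I`. -/
theorem recoverable_of_forall {F : Type*} [Field F] {n : ℕ} {C : Submodule F (Fin n → F)}
    {i : Fin n} {I : Finset (Fin n)} (h : ∀ c ∈ C, (∀ j ∈ I, c j = 0) → c i = 0) :
    Recoverable C i I := by
  have hspan : (LinearMap.proj i).comp C.subtype ∈ Submodule.span F
      (Set.range fun j : I => (LinearMap.proj (j : Fin n)).comp C.subtype) := by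
    apply mem_span_of_iInf_ker_le_ker
    intro c hc
    simp only [Submodule.mem_iInf, LinearMap.mem_ker] at hc
    exact h c c.2 fun j hj => hc ⟨j, hj⟩
  obtain ⟨a, ha⟩ := (Submodule.mem_span_range_iff_exists_fun F).1 hspan
  refine ⟨fun j => if hj : j ∈ I then a ⟨j, hj⟩ else 0, fun c hc => ?_⟩
  have := LinearMap.congr_fun ha ⟨c, hc⟩
  simp only [LinearMap.sum_apply, LinearMap.smul_apply, LinearMap.comp_apply,
    Submodule.subtype_apply, LinearMap.proj_apply, smul_eq_mul] at this
  rw [← this, ← Finset.sum_coe_sort I]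
  exact Finset.sum_congr rfl fun j _ => by simp

theorem exists_submodule_le_finrank_eq {F V : Type*} [Field F] [AddCommGroup V] [Module F V]
    (C : Submodule F V) {d : ℕ} (hd : d ≤ Module.finrank F C) :
    ∃ D ≤ C, Module.finrank F D = d := by
  obtain ⟨f, hf⟩ := exists_linearIndependent_of_le_finrank hd
  have hf' : LinearIndependent F (fun t => (f t : V)) :=
    hf.map' C.subtype (Submodule.ker_subtype C)
  refine ⟨Submodule.span F (Set.range fun t => (f t : V)), ?_, ?_⟩
  · rw [Submodule.span_le]
    rintro _ ⟨t, rfl⟩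
    exact (f t).2
  · rw [finrank_span_eq_card hf', Fintype.card_fin]

/-! ### Moore matrices -/

section
variable {p : ℕ} [Fact p.Prime] {K : Type*} [Field K] [Algebra (ZMod p) K]

theorem algebraMap_pow_pow (z : ZMod p) (s : ℕ) :
    (algebraMap (ZMod p) K z) ^ p ^ s = algebraMap (ZMod p) K z := by
  rw [← map_pow, ZMod.pow_card_pow]

/-- `𝔽_p`-linearity of the iterated Frobenius. -/
theorem sum_mul_pow_pow {ι : Type*} (t : Finset ι) (z : ι → ZMod p) (b : ι → K) (s : ℕ) :
    (∑ j ∈ t, algebraMap (ZMod p) K (z j) * b j) ^ p ^ s =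
      ∑ j ∈ t, algebraMap (ZMod p) K (z j) * b j ^ p ^ s := by
  have : CharP K p := charP_of_injective_algebraMap (algebraMap (ZMod p) K).injective p
  rw [sum_pow_char_pow]
  exact Finset.sum_congr rfl fun j _ => by rw [mul_pow, algebraMap_pow_pow]

/-- The Moore matrix of an `𝔽_p`-independent family is invertible: a left kernel vector would be a
nonzero linearized polynomial of degree less than `p ^ d` vanishing on the `p ^ d` elements of the
`𝔽_p`-span of the family. -/
theorem moore_injective {d : ℕ} {b : Fin d → K} (hb : LinearIndependent (ZMod p) b)
    {a : Fin d → K} (h : ∀ s < d, ∑ l, a l * b l ^ p ^ s = 0) : a = 0 := by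
  let M : Matrix (Fin d) (Fin d) K := fun s l => b l ^ p ^ (s : ℕ)
  by_contra ha
  have hM : M.mulVec a = 0 := by
    funext s
    rw [Pi.zero_apply, ← h s s.2]
    have h1 : M.mulVec a s = ∑ l, b l ^ p ^ (s : ℕ) * a l := rfl
    rw [h1]
    exact Finset.sum_congr rfl fun l _ => mul_comm _ _
  obtain ⟨c, hc0, hc⟩ := Matrix.exists_vecMul_eq_zero_iff.2
    (Matrix.exists_mulVec_eq_zero_iff.1 ⟨a, ha, hM⟩)
  have hc' : ∀ l, ∑ s, c s * b l ^ p ^ (s : ℕ) = 0 := fun l => congrFun hc l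
  let L : Polynomial K := ∑ s : Fin d, Polynomial.monomial (p ^ (s : ℕ)) (c s)
  have hp : 1 < p := (Fact.out : p.Prime).one_lt
  have hL0 : L ≠ 0 := by
    intro h0
    apply hc0
    funext s
    have h1 : L.coeff (p ^ (s : ℕ)) = c s := by
      simp only [L, Polynomial.finsetSum_coeff, Polynomial.coeff_monomial]
      rw [Finset.sum_eq_single s]
      · simp
      · intro t _ hts
        rw [if_neg]
        intro h2
        exact hts (Fin.ext (Nat.pow_right_injective hp h2))
      · simp
    rw [← h1, h0]
    simp
  have hdeg : L.natDegree < p ^ d := by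
    obtain ⟨s0, _⟩ : ∃ s : Fin d, c s ≠ 0 := by
      by_contra! hcc
      exact hc0 (funext hcc)
    refine lt_of_le_of_lt (b := p ^ (d - 1)) ?_ (Nat.pow_lt_pow_right hp (by have := s0.2; omega))
    apply Polynomial.natDegree_sum_le_of_forall_le
    intro s _
    refine (Polynomial.natDegree_monomial_le _).trans (Nat.pow_le_pow_right hp.le ?_)
    have := s.2
    omega
  apply hL0
  refine Polynomial.eq_zero_of_natDegree_lt_card_of_eval_eq_zero L
    (f := fun z : Fin d → ZMod p => ∑ l, algebraMap (ZMod p) K (z l) * b l) ?_ ?_ ?_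
  · intro z z' hzz
    have h3 : ∑ l, (z l - z' l) • b l = 0 := by
      simp only [Algebra.smul_def, map_sub, sub_mul, Finset.sum_sub_distrib]
      exact sub_eq_zero.2 hzz
    funext l
    exact sub_eq_zero.1 (Fintype.linearIndependent_iff.1 hb _ h3 l)
  · intro z
    simp only [L, Polynomial.eval_finsetSum, Polynomial.eval_monomial, sum_mul_pow_pow,
      Finset.mul_sum]
    rw [Finset.sum_comm]
    apply Finset.sum_eq_zero
    intro l _
    rw [← mul_zero (algebraMap (ZMod p) K (z l)), ← hc' l, Finset.mul_sum]
    exact Finset.sum_congr rfl fun _ _ => by ring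
  · simpa [ZMod.card] using hdeg

/-- The hypothesis `hx` says that `x` lies in the extension of scalars of `V` to `K`. Expanding `x`
in an `𝔽_p`-basis of `V` turns the equations in `h` into a Moore system for the images under `φ` of
the basis vectors. -/
theorem eq_zero_of_moore [FiniteDimensional (ZMod p) K] {n N : ℕ}
    (V : Submodule (ZMod p) (Fin n → ZMod p)) (hV : Module.finrank (ZMod p) V ≤ N)
    (φ : (Fin n → ZMod p) →ₗ[ZMod p] K) (hφ : ∀ v ∈ V, φ v = 0 → v = 0)
    (x : Fin n → K) (hx : ∀ ℓ : K →ₗ[ZMod p] ZMod p, (fun j => ℓ (x j)) ∈ V)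
    (h : ∀ s < N, ∑ j, φ (Pi.single j 1) ^ p ^ s * x j = 0) : x = 0 := by
  let ω := Module.finBasis (ZMod p) K
  let v := Module.finBasis (ZMod p) V
  let y : Fin (Module.finrank (ZMod p) K) → V := fun κ => ⟨fun j => ω.coord κ (x j), hx _⟩
  let a : Fin (Module.finrank (ZMod p) V) → K := fun l => ∑ κ, v.repr (y κ) l • ω κ
  have hxa : ∀ j, x j = ∑ l, a l * algebraMap (ZMod p) K ((v l : Fin n → ZMod p) j) := by
    intro j
    have h1 : ∀ κ, ω.coord κ (x j) = ∑ l, v.repr (y κ) l * (v l : Fin n → ZMod p) j := by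
      intro κ
      have h2 := congrArg (fun w : V => (w : Fin n → ZMod p) j) (v.sum_repr (y κ))
      simp only [Submodule.coe_sum, Submodule.coe_smul, Finset.sum_apply, Pi.smul_apply,
        smul_eq_mul] at h2
      exact h2.symm
    conv_lhs => rw [← ω.sum_repr (x j)]
    simp only [a, Finset.sum_mul]
    rw [Finset.sum_comm]
    refine Finset.sum_congr rfl fun κ _ => ?_
    have h3 : ω.repr (x j) κ = ω.coord κ (x j) := rfl
    rw [h3, h1, Finset.sum_smul]
    refine Finset.sum_congr rfl fun l _ => ?_
    simp only [Algebra.smul_def, map_mul]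
    ring
  have hφv : ∀ w : Fin n → ZMod p,
      φ w = ∑ j, algebraMap (ZMod p) K (w j) * φ (Pi.single j 1) := by
    intro w
    conv_lhs => rw [pi_eq_sum_univ' w, map_sum]
    refine Finset.sum_congr rfl fun j _ => ?_
    rw [map_smul, Algebra.smul_def]
  have hli : LinearIndependent (ZMod p) (fun l => φ (v l)) := by
    have : LinearIndependent (ZMod p) ((φ.comp V.subtype) ∘ v) := by
      apply v.linearIndependent.map'
      rw [LinearMap.ker_eq_bot']
      intro w hw
      exact Subtype.ext (hφ w w.2 hw)
    exact this
  have ha : a = 0 := by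
    apply moore_injective hli
    intro s hs
    rw [← h s (by omega)]
    simp only [hxa, Finset.mul_sum]
    rw [Finset.sum_comm]
    refine Finset.sum_congr rfl fun l _ => ?_
    rw [hφv, sum_mul_pow_pow, Finset.mul_sum]
    exact Finset.sum_congr rfl fun _ _ => by ring
  funext j
  rw [hxa j, ha]
  simp

/-- A space of dimension at most `[K : 𝔽_p]` embeds in `K`, and the embedding extends to the ambient
space. -/
theorem exists_injOn [FiniteDimensional (ZMod p) K] {n : ℕ}
    (W : Submodule (ZMod p) (Fin n → ZMod p))
    (hW : Module.finrank (ZMod p) W ≤ Module.finrank (ZMod p) K) :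
    ∃ φ : (Fin n → ZMod p) →ₗ[ZMod p] K, ∀ w ∈ W, φ w = 0 → w = 0 := by
  obtain ⟨g, hg⟩ := finrank_le_iff_exists_linearMap.1 hW
  obtain ⟨π, hπ⟩ := W.subtype.exists_leftInverse_of_injective (Submodule.ker_subtype W)
  refine ⟨g.comp π, fun w hw h => ?_⟩
  have h1 : π w = ⟨w, hw⟩ := LinearMap.congr_fun hπ ⟨w, hw⟩
  rw [LinearMap.comp_apply, h1] at h
  exact congrArg Subtype.val (hg (h.trans (map_zero g).symm))

end

theorem finrank_le_card_of_forall {F : Type*} [Field F] {n : ℕ} (V : Submodule F (Fin n → F))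
    (S : Finset (Fin n)) (h : ∀ v ∈ V, (∀ j ∈ S, v j = 0) → v = 0) :
    Module.finrank F V ≤ S.card := by
  let f : V →ₗ[F] (S → F) := (LinearMap.pi fun j : S => LinearMap.proj (j : Fin n)).comp V.subtype
  have hf : Function.Injective f := by
    rw [← LinearMap.ker_eq_bot, LinearMap.ker_eq_bot']
    intro w hw
    exact Subtype.ext (h w w.2 fun j hj => congrFun hw ⟨j, hj⟩)
  simpa using LinearMap.finrank_le_finrank_of_injective hf

/-! ### The code -/

/-- The `δ × n` part of the parity-check matrix: an identity block in columns `[0, δ)`, zeros in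
`[δ, B)`, and a staircase matrix in columns `[B, T + δ)`, followed by a zero column. -/
theorem exists_burst_rows (k : Type*) [Field k] {δ B T n : ℕ} (hδB : δ ≤ B) (hBT : B ≤ T)
    (hn : n = T + δ + 1) :
    ∃ h : ℕ → ℕ → k, (∀ i < δ, h i i = 1) ∧
      (∀ i < δ, ∀ j, j ≠ i → h i j ≠ 0 → i + B ≤ j ∧ j ≤ i + T) ∧
      (∀ i < δ, h i (i + T) ≠ 0) ∧
      ∀ s, B ≤ s → s ≤ T → ∀ y : Fin n → k,
        (∀ j : Fin n, j.val < s ∨ s + δ ≤ j.val → y j = 0) →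
        (∀ i < δ, ∑ j : Fin n, h i j * y j = 0) → y = 0 := by
  obtain ⟨P, hP⟩ := exists_staircase k δ (T - B)
  refine ⟨fun i j => if j < B then (if j = i then 1 else 0) else P i (j - B), ?_, ?_, ?_, ?_⟩
  · intro i hi
    simp [show i < B by omega]
  · intro i hi j hji hne
    by_cases hj : j < B
    · simp [hj, hji] at hne
    · simp only [hj, if_false] at hne
      constructor
      · by_contra hlt
        exact hne (hP.left_zero i hi _ (by omega))
      · by_contra hlt
        exact hne (hP.right_zero i hi _ (by omega))
  · intro i hi
    have := hP.right_ne i hi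
    rw [show i + (T - B) = i + T - B by omega] at this
    simpa [show ¬ i + T < B by omega] using this
  · intro s hs hsT y hy hrow
    set z : ℕ → k := fun j => if hj : j < n then y ⟨j, hj⟩ else 0 with hz
    have hzy : ∀ j : Fin n, z j = y j := fun j => by simp [hz]
    have hz0 : ∀ j, j < s ∨ s + δ ≤ j → z j = 0 := by
      intro j hj
      by_cases hjn : j < n
      · rw [← hy ⟨j, hjn⟩ hj]
        exact hzy ⟨j, hjn⟩
      · exact dif_neg hjn
    have key : ∀ j, z (B + j) = 0 := by
      refine hP.window_right (m := T + 1 + δ - B) (u := s - B) (by omega) (by omega) _ ?_ ?_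
      · intro j hj
        exact hz0 _ (by omega)
      · intro i hi
        have h1 := hrow i hi
        simp only [← hzy] at h1
        rw [Fin.sum_univ_eq_sum_range
          (fun j => (if j < B then (if j = i then 1 else 0) else P i (j - B)) * z j),
          sum_range_eq_window (u := B) (r := T + 1 + δ - B) _ (by omega)] at h1
        · rw [← h1]
          refine Finset.sum_congr rfl fun t _ => ?_
          rw [if_neg (by omega), Nat.add_sub_cancel_left]
        · intro j hj
          rcases hj with hj | hj
          · rw [hz0 j (by omega), mul_zero]
          · rw [hz0 j (by omega), mul_zero]
    funext j
    rw [← hzy]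
    by_cases hj : j.val < B
    · exact hz0 _ (by omega)
    · have := key (j - B)
      rwa [Nat.add_sub_cancel' (by omega)] at this

/-- The construction over any finite extension `K` of `𝔽_p` of degree at least `T + 1`. -/
theorem exists_code {p : ℕ} [Fact p.Prime] {K : Type*} [Field K] [Algebra (ZMod p) K]
    [FiniteDimensional (ZMod p) K] {N B T δ n : ℕ} (hN : 1 ≤ N) (hδ : δ + N = B) (hBT : B ≤ T)
    (hn : n = T + δ + 1) (hK : T + 1 ≤ Module.finrank (ZMod p) K) :
    ∃ C : Submodule K (Fin n → K), Module.finrank K C = T - N + 1 ∧ Conforms C N B T := by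
  obtain ⟨h, h_diag, h_supp, h_last, h_win⟩ :=
    exists_burst_rows (ZMod p) (show δ ≤ B by omega) hBT hn
  have h_zero : ∀ i < δ, ∀ j, i + T < j → h i j = 0 := by
    intro i hi j hj
    by_contra hne
    have := h_supp i hi j (by omega) hne
    omega
  -- `W` consists of the vectors supported on `[0, T] ∪ {n - 1}` and annihilated by row `0`; for
  -- `δ = 0` there is no row `0`, and `n = T + 1`.
  let W : Submodule (ZMod p) (Fin n → ZMod p) :=
    { carrier := {w | (∀ j : Fin n, T < j.val → j.val < n - 1 → w j = 0) ∧
        (0 < δ → ∑ j : Fin n, h 0 j * w j = 0)}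
      zero_mem' := by simp
      add_mem' := by
        rintro v w ⟨hv1, hv2⟩ ⟨hw1, hw2⟩
        refine ⟨fun j h1 h2 => by simp [hv1 j h1 h2, hw1 j h1 h2], fun h0 => ?_⟩
        simp [mul_add, Finset.sum_add_distrib, hv2 h0, hw2 h0]
      smul_mem' := by
        rintro a v ⟨hv1, hv2⟩
        refine ⟨fun j h1 h2 => by simp [hv1 j h1 h2], fun h0 => ?_⟩
        simp only [Pi.smul_apply, smul_eq_mul, mul_left_comm _ a, ← Finset.mul_sum, hv2 h0,
          mul_zero] }
  have hWdim : Module.finrank (ZMod p) W ≤ T + 1 := by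
    refine (finrank_le_card_of_forall W
      (Finset.univ.filter fun j : Fin n => (δ = 0 ∨ 0 < j.val) ∧ (j.val ≤ T ∨ j.val = n - 1))
      ?_).trans ?_
    · rintro w ⟨hw1, hw2⟩ hw
      have hpos : ∀ j : Fin n, (δ = 0 ∨ 0 < j.val) → w j = 0 := by
        intro j hj
        by_cases hj2 : j.val ≤ T ∨ j.val = n - 1
        · exact hw j (by simp only [Finset.mem_filter, Finset.mem_univ, true_and]; exact ⟨hj, hj2⟩)
        · exact hw1 j (by omega) (by omega)
      funext j
      by_cases hj : δ = 0 ∨ 0 < j.val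
      · exact hpos j hj
      · have h2 := hw2 (by omega)
        rw [Finset.sum_eq_single j] at h2
        · rw [show j.val = 0 by omega, h_diag 0 (by omega), one_mul] at h2
          exact h2
        · intro b _ hb
          have : b.val ≠ j.val := fun h' => hb (Fin.ext h')
          rw [hpos b (by omega), mul_zero]
        · simp
    · rw [← Finset.card_range (T + 1)]
      apply Finset.card_le_card_of_injOn (fun j : Fin n => if j.val ≤ T then j.val else 0)
      · intro j hj
        simp only [Finset.coe_range, Set.mem_Iio]
        split <;> omega
      · intro j hj j' hj' hjj
        simp only [Finset.coe_filter, Finset.mem_univ, true_and, Set.mem_ofPred_eq] at hj hj'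
        simp only at hjj
        apply Fin.ext
        split at hjj <;> split at hjj <;> omega
  obtain ⟨φ₀, hφ₀⟩ := exists_injOn (K := K) W (hWdim.trans hK)
  let tr : (Fin n → ZMod p) →ₗ[ZMod p] (Fin n → ZMod p) :=
    LinearMap.pi fun j => if j.val ≤ T ∨ j.val = n - 1 then LinearMap.proj j else 0
  have htr : ∀ v j, tr v j = if j.val ≤ T ∨ j.val = n - 1 then v j else 0 := by
    intro v j
    simp only [tr, LinearMap.pi_apply]
    split <;> simp
  let φ := φ₀.comp tr
  have hφ_single : ∀ j : Fin n, T < j.val → j.val < n - 1 → φ (Pi.single j 1) = 0 := by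
    intro j h1 h2
    have : tr (Pi.single j 1) = 0 := by
      funext l
      rw [htr]
      by_cases hl : l = j
      · subst hl
        rw [if_neg (by omega)]
        rfl
      · simp [hl]
    simp only [φ, LinearMap.comp_apply, this, map_zero]
  -- Rows `1, …, R - 1` are triangular in columns `T + 1, …, T + R - 1`, so a vector they annihilate
  -- is determined by its values on `[0, T] ∪ {n - 1}`, where `φ₀` is injective.
  have hφ : ∀ R ≤ δ, (0 < δ → 0 < R) → ∀ v : Fin n → ZMod p,
      (∀ r < R, ∑ j : Fin n, h r j * v j = 0) →
      (∀ j : Fin n, R + T ≤ j.val → j.val < n - 1 → v j = 0) → φ v = 0 → v = 0 := by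
    intro R hR hR0 v hrow hv hφv
    have hw : tr v = 0 := by
      apply hφ₀ _ _ hφv
      refine ⟨fun j h1 h2 => by rw [htr, if_neg (by omega)], fun h0 => ?_⟩
      rw [← hrow 0 (hR0 h0)]
      refine Finset.sum_congr rfl fun j _ => ?_
      rw [htr]
      by_cases hj : j.val ≤ T
      · rw [if_pos (Or.inl hj)]
      · rw [h_zero 0 h0 j (by omega), zero_mul, zero_mul]
    have hv0 : ∀ j : Fin n, (j.val ≤ T ∨ j.val = n - 1) → v j = 0 := by
      intro j hj
      have := congrFun hw j
      rwa [htr, if_pos hj] at this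
    have hv1 : ∀ r, 0 < r → r < R → ∀ j : Fin n, j.val = r + T → v j = 0 := by
      intro r
      induction r using Nat.strong_induction_on with
      | _ r ih =>
        intro h0 hr j hj
        have h2 := hrow r hr
        rw [Finset.sum_eq_single j] at h2
        · rw [hj] at h2
          exact (mul_eq_zero.1 h2).resolve_left (h_last r (by omega))
        · intro b _ hb
          have hbj : b.val ≠ j.val := fun h' => hb (Fin.ext h')
          by_cases h3 : b.val ≤ T
          · rw [hv0 b (Or.inl h3), mul_zero]
          by_cases h4 : b.val < j.val
          · rw [ih (b.val - T) (by omega) (by omega) (by omega) b (by omega), mul_zero]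
          · rw [h_zero r (by omega) b (by omega), zero_mul]
        · simp
    funext j
    by_cases h1 : j.val ≤ T ∨ j.val = n - 1
    · exact hv0 j h1
    by_cases h2 : R + T ≤ j.val
    · exact hv j h2 (by omega)
    · exact hv1 (j.val - T) (by omega) (by omega) j (by omega)
  let M : Matrix (Fin δ ⊕ Fin N) (Fin n) K := fun r j =>
    Sum.elim (fun i : Fin δ => algebraMap (ZMod p) K (h i j))
      (fun s : Fin N => φ (Pi.single j 1) ^ p ^ (s : ℕ)) r
  have hdim : T - N + 1 ≤ Module.finrank K (LinearMap.ker M.mulVecLin) := by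
    have h1 := LinearMap.finrank_range_add_finrank_ker M.mulVecLin
    have h2 := Submodule.finrank_le (LinearMap.range M.mulVecLin)
    simp only [Module.finrank_fintype_fun_eq_card, Fintype.card_sum, Fintype.card_fin] at h1 h2
    omega
  obtain ⟨C, hC, hCdim⟩ := exists_submodule_le_finrank_eq _ hdim
  refine ⟨C, hCdim, ?_⟩
  have hC1 : ∀ c ∈ C, ∀ i < δ, ∑ j : Fin n, algebraMap (ZMod p) K (h i j) * c j = 0 :=
    fun c hc i hi => congrFun (LinearMap.mem_ker.1 (hC hc)) (Sum.inl ⟨i, hi⟩)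
  have hC2 : ∀ c ∈ C, ∀ s < N, ∑ j : Fin n, φ (Pi.single j 1) ^ p ^ s * c j = 0 :=
    fun c hc s hs => congrFun (LinearMap.mem_ker.1 (hC hc)) (Sum.inr ⟨s, hs⟩)
  have hslice : ∀ x : Fin n → K, ∀ r, ∑ j : Fin n, algebraMap (ZMod p) K (h r j) * x j = 0 →
      ∀ ℓ : K →ₗ[ZMod p] ZMod p, ∑ j : Fin n, h r j * ℓ (x j) = 0 := by
    intro x r hx ℓ
    rw [← map_zero ℓ, ← hx, map_sum]
    refine Finset.sum_congr rfl fun j _ => ?_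
    rw [← Algebra.smul_def, map_smul, smul_eq_mul]
  have hp0 : ∀ s, p ^ s ≠ 0 := fun s => pow_ne_zero _ (Fact.out : p.Prime).ne_zero
  -- At most `N` erasures and `i < δ`: only columns up to `i + T` are available, but the unavailable
  -- columns enter the Moore rows through column `n - 1` alone. This one extra unknown is
  -- compensated by row `i`, which is nonzero at the erased coordinate `i`.
  have early_random : ∀ i : Fin n, i.val < δ → ∀ E : Finset (Fin n), E.card ≤ N → i ∈ E →
      ∀ c ∈ C, (∀ j : Fin n, j.val ≤ i.val + T → j ∉ E → c j = 0) → c i = 0 := by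
    intro i hi E hE hiE c hc hcE
    let V : Submodule (ZMod p) (Fin n → ZMod p) :=
      { carrier := {v | (∀ j : Fin n, j.val ≠ n - 1 → (j ∉ E ∨ i.val + T < j.val) → v j = 0) ∧
          (∀ r < i.val + 1, ∑ j : Fin n, h r j * v j = 0)}
        zero_mem' := by simp
        add_mem' := by
          rintro v w ⟨hv1, hv2⟩ ⟨hw1, hw2⟩
          refine ⟨fun j h1 h2 => by simp [hv1 j h1 h2, hw1 j h1 h2], fun r hr => ?_⟩
          simp [mul_add, Finset.sum_add_distrib, hv2 r hr, hw2 r hr]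
        smul_mem' := by
          rintro a v ⟨hv1, hv2⟩
          refine ⟨fun j h1 h2 => by simp [hv1 j h1 h2], fun r hr => ?_⟩
          simp only [Pi.smul_apply, smul_eq_mul, mul_left_comm _ a, ← Finset.mul_sum, hv2 r hr,
            mul_zero] }
    have hV : Module.finrank (ZMod p) V ≤ N := by
      refine (finrank_le_card_of_forall V
        ((insert (⟨n - 1, by omega⟩ : Fin n) E).erase i) ?_).trans ?_
      · rintro v ⟨hv1, hv2⟩ hv
        have hne : ∀ j : Fin n, j ≠ i → v j = 0 := by
          intro j hji
          by_cases h1 : j.val = n - 1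
          · exact hv j (Finset.mem_erase.2 ⟨hji, Finset.mem_insert.2 (Or.inl (Fin.ext h1))⟩)
          by_cases h2 : j ∈ E
          · exact hv j (Finset.mem_erase.2 ⟨hji, Finset.mem_insert_of_mem h2⟩)
          · exact hv1 j h1 (Or.inl h2)
        funext j
        by_cases hji : j = i
        · subst hji
          have h2 := hv2 j.val (by omega)
          rw [Finset.sum_eq_single j] at h2
          · rwa [h_diag _ hi, one_mul] at h2
          · intro b _ hb
            rw [hne b hb, mul_zero]
          · simp
        · exact hne j hji
      · rw [Finset.card_erase_of_mem (Finset.mem_insert_of_mem hiE)]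
        have := Finset.card_insert_le (⟨n - 1, by omega⟩ : Fin n) E
        omega
    let x : Fin n → K := fun j => if j.val ≤ i.val + T ∨ j.val = n - 1 then c j else 0
    have hx : x = 0 := by
      refine eq_zero_of_moore V hV φ ?_ x ?_ ?_
      · rintro v ⟨hv1, hv2⟩ hv
        exact hφ (i.val + 1) (by omega) (by omega) v hv2
          (fun j h1 h2 => hv1 j (by omega) (Or.inr (by omega))) hv
      · intro ℓ
        refine ⟨fun j h1 h2 => ?_, fun r hr => ?_⟩
        · have : x j = 0 := by
            by_cases h3 : j.val ≤ i.val + T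
            · simp only [x]
              rw [if_pos (Or.inl h3)]
              exact hcE j h3 (h2.resolve_right (by omega))
            · exact if_neg (by omega)
          change ℓ (x j) = 0
          rw [this, map_zero]
        · apply hslice
          rw [← hC1 c hc r (by omega)]
          refine Finset.sum_congr rfl fun j _ => ?_
          by_cases h3 : j.val ≤ i.val + T
          · simp only [x]
            rw [if_pos (Or.inl h3)]
          · rw [h_zero r (by omega) j (by omega), map_zero, zero_mul, zero_mul]
      · intro s hs
        rw [← hC2 c hc s hs]
        refine Finset.sum_congr rfl fun j _ => ?_
        by_cases h3 : j.val ≤ i.val + T ∨ j.val = n - 1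
        · simp only [x]
          rw [if_pos h3]
        · rw [hφ_single j (by omega) (by omega), zero_pow (hp0 s), zero_mul, zero_mul]
    have := congrFun hx i
    simp only [x] at this
    rwa [if_pos (Or.inl (by omega))] at this
  -- A burst and `i < δ`: row `i` involves no other erased coordinate.
  have early_burst : ∀ i : Fin n, i.val < δ → ∀ u v : ℕ, v - u + 1 ≤ B →
      ∀ c ∈ C, (∀ j : Fin n, j.val ≤ i.val + T → ¬(u ≤ j.val ∧ j.val ≤ v) → c j = 0) →
      c i = 0 := by
    intro i hi u v huv c hc hcE
    by_cases hiE : u ≤ i.val ∧ i.val ≤ v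
    swap
    · exact hcE i (by omega) hiE
    have h2 := hC1 c hc i.val hi
    rw [Finset.sum_eq_single i] at h2
    · rwa [h_diag _ hi, map_one, one_mul] at h2
    · intro b _ hb
      have hbi : b.val ≠ i.val := fun h' => hb (Fin.ext h')
      by_cases h3 : h i.val b.val = 0
      · rw [h3, map_zero, zero_mul]
      · have := h_supp i.val hi b.val hbi h3
        rw [hcE b this.2 (by omega), mul_zero]
    · simp
  -- Erasure patterns `E` on which the rows over `𝔽_p` leave at most `N` degrees of freedom are
  -- corrected by the Moore rows when all the other coordinates are available.
  have late : ∀ E : Finset (Fin n), (∀ V : Submodule (ZMod p) (Fin n → ZMod p),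
        (∀ v ∈ V, (∀ j ∉ E, v j = 0) ∧ ∀ r < δ, ∑ j : Fin n, h r j * v j = 0) →
        Module.finrank (ZMod p) V ≤ N) →
      ∀ c ∈ C, (∀ j ∉ E, c j = 0) → c = 0 := by
    intro E hE c hc hcE
    let V : Submodule (ZMod p) (Fin n → ZMod p) :=
      { carrier := {v | (∀ j ∉ E, v j = 0) ∧ ∀ r < δ, ∑ j : Fin n, h r j * v j = 0}
        zero_mem' := by simp
        add_mem' := by
          rintro v w ⟨hv1, hv2⟩ ⟨hw1, hw2⟩
          refine ⟨fun j h1 => by simp [hv1 j h1, hw1 j h1], fun r hr => ?_⟩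
          simp [mul_add, Finset.sum_add_distrib, hv2 r hr, hw2 r hr]
        smul_mem' := by
          rintro a v ⟨hv1, hv2⟩
          refine ⟨fun j h1 => by simp [hv1 j h1], fun r hr => ?_⟩
          simp only [Pi.smul_apply, smul_eq_mul, mul_left_comm _ a, ← Finset.mul_sum, hv2 r hr,
            mul_zero] }
    refine eq_zero_of_moore V (hE V fun v hv => hv) φ ?_ c ?_ (hC2 c hc)
    · rintro v ⟨hv1, hv2⟩ hv
      exact hφ δ le_rfl id v hv2 (fun j h1 h2 => by omega) hv
    · intro ℓ
      exact ⟨fun j hj => (congrArg ℓ (hcE j hj)).trans (map_zero ℓ), fun r hr => hslice c r (hC1 c hc r hr) ℓ⟩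
  intro i
  have hi := i.2
  refine ⟨fun E hE => recoverable_of_forall fun c hc hcE => ?_,
    fun u v huv hv hB => recoverable_of_forall fun c hc hcE => ?_⟩
  · simp only [Finset.mem_sdiff, Finset.mem_filter, Finset.mem_univ, true_and] at hcE
    by_cases hid : i.val < δ
    · by_cases hiE : i ∈ E
      · exact early_random i hid E hE hiE c hc fun j h1 h2 => hcE j ⟨by omega, h2⟩
      · exact hcE i ⟨by omega, hiE⟩
    · have := late E (fun V hV => (finrank_le_card_of_forall V E fun v hv hvE => by
        funext j
        by_cases hj : j ∈ E
        · exact hvE j hj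
        · exact (hV v hv).1 j hj).trans hE) c hc fun j hj => hcE j ⟨by omega, hj⟩
      rw [this]
      rfl
  · simp only [Finset.mem_filter, Finset.mem_univ, true_and] at hcE
    by_cases hid : i.val < δ
    · exact early_burst i hid u v hB c hc fun j h1 h2 => hcE j ⟨by omega, h2⟩
    · -- The coordinates below `δ` vanish by `early_burst`, so the burst starts at `a ≥ δ`. The window
      -- `[s, s + δ)` is invertible and covers all but at most `N` of the coordinates in `[a, v]`.
      set a := max u δ with ha
      set s := min (max a B) T with hs
      have := late (Finset.univ.filter fun j : Fin n => a ≤ j.val ∧ j.val ≤ v) ?_ c hc ?_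
      · rw [this]
        rfl
      · intro V hV
        refine (finrank_le_card_of_forall V (Finset.univ.filter fun j : Fin n =>
          (a ≤ j.val ∧ j.val ≤ v) ∧ ¬(s ≤ j.val ∧ j.val < s + δ)) ?_).trans ?_
        · intro w hw hw0
          refine h_win s (by omega) (by omega) w (fun j hj => ?_) (hV w hw).2
          by_cases hj2 : a ≤ j.val ∧ j.val ≤ v
          · apply hw0
            simp only [Finset.mem_filter, Finset.mem_univ, true_and]
            exact ⟨hj2, by omega⟩
          · apply (hV w hw).1
            simpa only [Finset.mem_filter, Finset.mem_univ, true_and] using hj2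
        · refine (Finset.card_le_card_of_injOn (t := Finset.Ico a s ∪ Finset.Ico (s + δ) (v + 1))
            Fin.val ?_ Fin.val_injective.injOn).trans ?_
          · intro j hj
            simp only [Finset.coe_filter, Finset.mem_univ, true_and, Set.mem_ofPred_eq] at hj
            simp only [Finset.coe_union, Finset.coe_Ico, Set.mem_union, Set.mem_Ico]
            omega
          · refine (Finset.card_union_le _ _).trans ?_
            simp only [Nat.card_Ico]
            omega
      · intro j hj
        simp only [Finset.mem_filter, Finset.mem_univ, true_and] at hj
        by_cases hjδ : j.val < δ
        · exact early_burst j hjδ u v hB c hc fun l h1 h2 => hcE l ⟨by omega, h2⟩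
        · exact hcE j ⟨by omega, by omega⟩

theorem constructionB_exists
    (N B T : ℕ) (hN : 1 ≤ N) (hNB : N ≤ B) (hBT : B ≤ T)
    (p e : ℕ) [Fact p.Prime] (he : 1 ≤ e) (hq : max 2 (B - N) ≤ p ^ e) :
    ∃ C : Submodule (GaloisField p (e * (T + 1)))
        (Fin (B + T - N + 1) → GaloisField p (e * (T + 1))),
      Module.finrank (GaloisField p (e * (T + 1))) C = T - N + 1 ∧
        Conforms C N B T := by
  refine exists_code (p := p) (δ := B - N) hN (by omega) hBT (by omega) ?_
  rw [GaloisField.finrank p (Nat.mul_ne_zero (by omega) (by omega))]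
  exact Nat.le_mul_of_pos_left _ he
end
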